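/- arXiv:2306.16881 — 3 statements merged into one kernel-verified Lean document; each statement's English description precedes it below -/
import Mathlib

section
/- Let A ⊆ Ag, let x be one of the frame conditions D, T, B, 4, 5, and let L1, L2 be logics without recursion operators such that L1(α) = L2(α) + x for α ∈ A and L1(α) = L2(α) otherwise, where each L2(α) only includes frame conditions strictly preceding x in the fixed order D, T, B, 4, 5. Let d = md(φ) if x ∉ {4,5} and d = md(φ)·|φ| if x ∈ {4,5}. Then a recursion-free formula φ is L1-satisfiable if and only if the formula φ ∧ Inv_d(⋀_{ψ ∈ s̄ub(φ), α ∈ A} ax^x_α[ψ/p]) is L2-satisfiable. -/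
/-- Recursion-free multi-agent modal formulas. -/
inductive MFormula (Ag PVar : Type) : Type
  | prop  : PVar → MFormula Ag PVar
  | nprop : PVar → MFormula Ag PVar
  | tt    : MFormula Ag PVar
  | ff    : MFormula Ag PVar
  | and   : MFormula Ag PVar → MFormula Ag PVar → MFormula Ag PVar
  | or    : MFormula Ag PVar → MFormula Ag PVar → MFormula Ag PVar
  | dia   : Ag → MFormula Ag PVar → MFormula Ag PVar
  | box   : Ag → MFormula Ag PVar → MFormula Ag PVar
  deriving DecidableEq

/-- A Kripke model. -/
structure KModel (Ag PVar : Type) where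
  W : Type
  h_ne : Nonempty W
  R : Ag → W → W → Prop
  V : W → Set PVar

variable {Ag PVar : Type}

/-- Standard modal semantics. -/
def MFormula.sem (M : KModel Ag PVar) : MFormula Ag PVar → Set M.W
  | .prop p => {s | p ∈ M.V s}
  | .nprop p => {s | p ∉ M.V s}
  | .tt => Set.univ
  | .ff => ∅
  | .and φ ψ => MFormula.sem M φ ∩ MFormula.sem M ψ
  | .or φ ψ => MFormula.sem M φ ∪ MFormula.sem M ψ
  | .box a φ => {s | ∀ t, M.R a s t → t ∈ MFormula.sem M φ}
  | .dia a φ => {s | ∃ t, M.R a s t ∧ t ∈ MFormula.sem M φ}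

inductive FrameCond : Type
  | D | T | B | four | five
  deriving DecidableEq

def SatisfiesCond {W : Type} (R : W → W → Prop) : FrameCond → Prop
  | .D => ∀ s, ∃ t, R s t
  | .T => ∀ s, R s s
  | .B => ∀ s t, R s t → R t s
  | .four => ∀ s t u, R s t → R t u → R s u
  | .five => ∀ s t u, R s t → R s u → R t u

def IsLModel (L : Ag → Set FrameCond) (M : KModel Ag PVar) : Prop :=
  ∀ a : Ag, ∀ c ∈ L a, SatisfiesCond (M.R a) c

def MSatisfiable (L : Ag → Set FrameCond) (φ : MFormula Ag PVar) : Prop :=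
  ∃ (M : KModel Ag PVar), IsLModel L M ∧ ∃ w : M.W, w ∈ MFormula.sem M φ

/-- Modal depth. -/
def MFormula.md : MFormula Ag PVar → ℕ
  | .and φ ψ => max (MFormula.md φ) (MFormula.md ψ)
  | .or φ ψ => max (MFormula.md φ) (MFormula.md ψ)
  | .dia _ φ => MFormula.md φ + 1
  | .box _ φ => MFormula.md φ + 1
  | _ => 0

/-- Syntactic negation (usual dualities). -/
def MFormula.neg : MFormula Ag PVar → MFormula Ag PVar
  | .prop p => .nprop p
  | .nprop p => .prop p
  | .tt => .ff
  | .ff => .tt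
  | .and φ ψ => .or (MFormula.neg φ) (MFormula.neg ψ)
  | .or φ ψ => .and (MFormula.neg φ) (MFormula.neg ψ)
  | .dia a φ => .box a (MFormula.neg φ)
  | .box a φ => .dia a (MFormula.neg φ)

/-- Implication φ → ψ as ¬φ ∨ ψ. -/
def MFormula.impl (φ ψ : MFormula Ag PVar) : MFormula Ag PVar := .or φ.neg ψ

/-- The list of subformulas. -/
def MFormula.subList : MFormula Ag PVar → List (MFormula Ag PVar)
  | .and φ ψ => .and φ ψ :: (MFormula.subList φ ++ MFormula.subList ψ)
  | .or φ ψ => .or φ ψ :: (MFormula.subList φ ++ MFormula.subList ψ)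
  | .dia a φ => .dia a φ :: MFormula.subList φ
  | .box a φ => .box a φ :: MFormula.subList φ
  | φ => [φ]

variable [DecidableEq Ag] [DecidableEq PVar]

/-- The set of subformulas sub(φ). -/
def msub (φ : MFormula Ag PVar) : Finset (MFormula Ag PVar) := φ.subList.toFinset

/-- |φ| is the number of distinct subformulas. -/
def msize (φ : MFormula Ag PVar) : ℕ := (msub φ).card

/-- s̄ub(φ) = sub(φ) ∪ {¬ψ | ψ ∈ sub(φ)}. -/
def msbar (φ : MFormula Ag PVar) : Finset (MFormula Ag PVar) :=
  msub φ ∪ (msub φ).image MFormula.neg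

/-- The instance ax^x_α[ψ/p] of the axiom for frame condition x. -/
def axInst (x : FrameCond) (a : Ag) (ψ : MFormula Ag PVar) : MFormula Ag PVar :=
  match x with
  | .D => .dia a .tt
  | .T => MFormula.impl (.box a ψ) ψ
  | .B => MFormula.impl (.dia a (.box a ψ)) ψ
  | .four => MFormula.impl (.box a ψ) (.box a (.box a ψ))
  | .five => MFormula.impl (.dia a (.box a ψ)) (.box a ψ)

/-- Finite conjunction. -/
def bigAndM : List (MFormula Ag PVar) → MFormula Ag PVar
  | [] => .tt
  | φ :: l => .and φ (bigAndM l)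

/-- [Ag]φ = ⋀_{α ∈ Ag} [α]φ. -/
noncomputable def boxAg [Fintype Ag] (φ : MFormula Ag PVar) : MFormula Ag PVar :=
  bigAndM ((Finset.univ : Finset Ag).toList.map (fun a => MFormula.box a φ))

/-- [Ag]^i φ. -/
noncomputable def boxAgIter [Fintype Ag] : ℕ → MFormula Ag PVar → MFormula Ag PVar
  | 0, φ => φ
  | n + 1, φ => boxAg (boxAgIter n φ)

/-- Inv_d(φ) = ⋀_{i ≤ d} [Ag]^i φ. -/
noncomputable def invd [Fintype Ag] (d : ℕ) (φ : MFormula Ag PVar) : MFormula Ag PVar :=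
  bigAndM ((List.range (d + 1)).map (fun i => boxAgIter i φ))

/-- The one-step translation: φ ∧ Inv_d(⋀_{ψ ∈ s̄ub(φ), α ∈ A} ax^x_α[ψ/p]). -/
noncomputable def translX [Fintype Ag] (A : Finset Ag) (x : FrameCond) (φ : MFormula Ag PVar) :
    MFormula Ag PVar :=
  let d : ℕ := if x = FrameCond.four ∨ x = FrameCond.five then φ.md * msize φ else φ.md
  .and φ (invd d (bigAndM ((msbar φ).toList.map
    (fun ψ => bigAndM (A.toList.map (fun a => axInst x a ψ))))))

/-- Position of a frame condition in the fixed order D, T, B, 4, 5. -/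
def condIdx : FrameCond → ℕ
  | .D => 0
  | .T => 1
  | .B => 2
  | .four => 3
  | .five => 4

/-!
Correspondence theory would let the axioms force the frame conditions if they held with arbitrary
instances; here only instances over `s̄ub(φ)` are available, and only up to depth `d`. Given a model
`M` of the translation, a new model is therefore built from copies `(t, k)` of the states of `M`,
where `k` bounds the depth of the formulas whose truth is transferred. Its edges are defined by what
the frame conditions demand of the true formulas `[a]χ ∈ s̄ub(φ)`: these may only grow along an edge
of a transitive agent and are the same at all successors along a euclidean agent.

Each step usually costs one level. Along transitive or euclidean edges, however, composing edges
must not cost anything, so a copy entered by such an edge keeps the depth of its predecessor for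
that agent. Its own successors for the agent are then taken from a nearby state of `M`, its anchor,
around which the axioms are still known to hold. The anchor moves one step only when the set of
true boxes changes. This set changes monotonically and has fewer than `|φ|` members, so at
most `|φ|` steps in `M` are spent per level, which gives the bound `md(φ)·|φ|`.
-/

section Semantics

omit [DecidableEq Ag] [DecidableEq PVar]

namespace MFormula

theorem neg_neg (ψ : MFormula Ag PVar) : ψ.neg.neg = ψ := by
  induction ψ <;> simp_all [neg]

theorem md_neg (ψ : MFormula Ag PVar) : ψ.neg.md = ψ.md := by
  induction ψ <;> simp_all [neg, md]

theorem mem_sem_neg {M : KModel Ag PVar} {ψ : MFormula Ag PVar} {s : M.W} :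
    s ∈ ψ.neg.sem M ↔ s ∉ ψ.sem M := by
  induction ψ generalizing s <;> simp_all [neg, sem, imp_iff_not_or]

theorem mem_sem_impl {M : KModel Ag PVar} {ψ χ : MFormula Ag PVar} {s : M.W} :
    s ∈ (ψ.impl χ).sem M ↔ (s ∈ ψ.sem M → s ∈ χ.sem M) :=
  (or_congr_left mem_sem_neg).trans imp_iff_not_or.symm

theorem mem_subList_self (ψ : MFormula Ag PVar) : ψ ∈ ψ.subList := by
  cases ψ <;> simp [subList]

theorem mem_subList_trans {φ ψ χ : MFormula Ag PVar} (hψ : ψ ∈ φ.subList)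
    (hχ : χ ∈ ψ.subList) : χ ∈ φ.subList := by
  induction φ <;> grind [subList]

theorem exists_mem_subList_md_eq_zero (φ : MFormula Ag PVar) : ∃ ψ ∈ φ.subList, ψ.md = 0 := by
  induction φ with
  | prop | nprop | tt | ff => simp [subList, md]
  | and _ _ ih _ | or _ _ ih _ | dia _ _ ih | box _ _ ih =>
    obtain ⟨ψ, hψ, hψ0⟩ := ih
    exact ⟨ψ, by simp [subList, hψ], hψ0⟩

end MFormula

theorem mem_sem_bigAndM {M : KModel Ag PVar} {l : List (MFormula Ag PVar)} {s : M.W} :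
    s ∈ (bigAndM l).sem M ↔ ∀ ψ ∈ l, s ∈ ψ.sem M := by
  induction l with
  | nil => simp [bigAndM, MFormula.sem]
  | cons ψ l ih => simp [bigAndM, MFormula.sem, ih]

theorem mem_sem_boxAg [Fintype Ag] {M : KModel Ag PVar} {ψ : MFormula Ag PVar} {s : M.W} :
    s ∈ (boxAg ψ).sem M ↔ ∀ a t, M.R a s t → t ∈ ψ.sem M := by
  simp [boxAg, mem_sem_bigAndM, MFormula.sem]

/-- `P` holds at every state that can be reached from the given one in at most `n` steps of
arbitrary agents; this is what `invd n` expresses. -/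
def KModel.HoldsWithin (M : KModel Ag PVar) (P : M.W → Prop) : ℕ → M.W → Prop
  | 0, s => P s
  | n + 1, s => P s ∧ ∀ a t, M.R a s t → M.HoldsWithin P n t

namespace KModel.HoldsWithin

variable {M : KModel Ag PVar} {P Q : M.W → Prop} {n k : ℕ} {s t : M.W}

theorem self (h : M.HoldsWithin P n s) : P s := by
  cases n with
  | zero => exact h
  | succ n => exact h.1

theorem succ {a : Ag} (h : M.HoldsWithin P (n + 1) s) (hst : M.R a s t) : M.HoldsWithin P n t :=
  h.2 a t hst

theorem anti (h : M.HoldsWithin P n s) (hkn : k ≤ n) : M.HoldsWithin P k s := by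
  induction n generalizing k s with
  | zero => rwa [Nat.le_zero.mp hkn]
  | succ n ih =>
    cases k with
    | zero => exact h.1
    | succ k => exact ⟨h.1, fun a t hst => ih (h.2 a t hst) (Nat.le_of_succ_le_succ hkn)⟩

theorem imp (h : M.HoldsWithin P n s) (hPQ : ∀ t, P t → Q t) : M.HoldsWithin Q n s := by
  induction n generalizing s with
  | zero => exact hPQ s h
  | succ n ih => exact ⟨hPQ s h.1, fun a t hst => ih (h.2 a t hst)⟩

theorem of_forall (h : ∀ t, P t) : M.HoldsWithin P n s := by
  induction n generalizing s with
  | zero => exact h s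
  | succ n ih => exact ⟨h s, fun _ _ _ => ih⟩

end KModel.HoldsWithin

theorem mem_sem_invd [Fintype Ag] {M : KModel Ag PVar} {ψ : MFormula Ag PVar} {n : ℕ} {s : M.W} :
    s ∈ (invd n ψ).sem M ↔ M.HoldsWithin (· ∈ ψ.sem M) n s := by
  induction n generalizing s with
  | zero => simp [invd, mem_sem_bigAndM, boxAgIter, KModel.HoldsWithin]
  | succ n ih =>
    have hsucc : s ∈ (invd (n + 1) ψ).sem M ↔
        s ∈ ψ.sem M ∧ ∀ a t, M.R a s t → t ∈ (invd n ψ).sem M := by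
      simp only [invd, List.range_succ_eq_map (n := n + 1), mem_sem_bigAndM, List.map_cons,
        List.map_map, List.forall_mem_cons, List.forall_mem_map, Function.comp_apply, boxAgIter,
        mem_sem_boxAg]
      exact and_congr_right fun _ => ⟨fun h a t hst i hi => h i hi a t hst,
        fun h i hi a t hst => h a t hst i hi⟩
    simp only [hsucc, ih, KModel.HoldsWithin]

theorem mem_sem_axInst {M : KModel Ag PVar} {x : FrameCond} {a : Ag}
    (h : SatisfiesCond (M.R a) x) (ψ : MFormula Ag PVar) (s : M.W) :
    s ∈ (axInst x a ψ).sem M := by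
  cases x with
  | D => exact (h s).imp fun t hst => ⟨hst, trivial⟩
  | T => exact MFormula.mem_sem_impl.mpr fun hs => hs s (h s)
  | B => exact MFormula.mem_sem_impl.mpr fun ⟨t, hst, ht⟩ => ht s (h s t hst)
  | four => exact MFormula.mem_sem_impl.mpr fun hs t hst u htu => hs u (h s t u hst htu)
  | five => exact MFormula.mem_sem_impl.mpr fun ⟨t, hst, ht⟩ u hsu => ht u (h s t u hst hsu)

end Semantics

section Subformulas

variable {φ ψ χ : MFormula Ag PVar} {a : Ag}

theorem mem_msub_self (φ : MFormula Ag PVar) : φ ∈ msub φ :=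
  List.mem_toFinset.mpr φ.mem_subList_self

theorem msub_subset (h : ψ ∈ msub φ) : msub ψ ⊆ msub φ := fun _ hχ =>
  List.mem_toFinset.mpr
    (MFormula.mem_subList_trans (List.mem_toFinset.mp h) (List.mem_toFinset.mp hχ))

theorem left_mem_msub_of_and (h : .and ψ χ ∈ msub φ) : ψ ∈ msub φ :=
  msub_subset h (by simp [msub, MFormula.subList, MFormula.mem_subList_self])

theorem right_mem_msub_of_and (h : .and ψ χ ∈ msub φ) : χ ∈ msub φ :=
  msub_subset h (by simp [msub, MFormula.subList, MFormula.mem_subList_self])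

theorem left_mem_msub_of_or (h : .or ψ χ ∈ msub φ) : ψ ∈ msub φ :=
  msub_subset h (by simp [msub, MFormula.subList, MFormula.mem_subList_self])

theorem right_mem_msub_of_or (h : .or ψ χ ∈ msub φ) : χ ∈ msub φ :=
  msub_subset h (by simp [msub, MFormula.subList, MFormula.mem_subList_self])

theorem mem_msub_of_box (h : .box a χ ∈ msub φ) : χ ∈ msub φ :=
  msub_subset h (by simp [msub, MFormula.subList, MFormula.mem_subList_self])

theorem mem_msub_of_dia (h : .dia a χ ∈ msub φ) : χ ∈ msub φ :=
  msub_subset h (by simp [msub, MFormula.subList, MFormula.mem_subList_self])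

theorem mem_msbar_of_mem_msub (h : ψ ∈ msub φ) : ψ ∈ msbar φ :=
  Finset.mem_union_left _ h

theorem mem_msbar : ψ ∈ msbar φ ↔ ψ ∈ msub φ ∨ ψ.neg ∈ msub φ := by
  simp only [msbar, Finset.mem_union, Finset.mem_image]
  exact or_congr_right ⟨fun ⟨χ, hχ, h⟩ => by rwa [← h, MFormula.neg_neg],
    fun h => ⟨_, h, ψ.neg_neg⟩⟩

theorem neg_mem_msbar (h : ψ ∈ msbar φ) : ψ.neg ∈ msbar φ := by
  rw [mem_msbar] at h ⊢
  rwa [MFormula.neg_neg, or_comm]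

theorem mem_msbar_of_box (h : .box a χ ∈ msbar φ) : χ ∈ msbar φ := by
  rw [mem_msbar] at h ⊢
  exact h.imp mem_msub_of_box mem_msub_of_dia

/-- The formulas `χ` of modal depth below `k` with `[a]χ ∈ s̄ub(φ)`. -/
def boxBodies (φ : MFormula Ag PVar) (a : Ag) (k : ℕ) : Finset (MFormula Ag PVar) :=
  (msbar φ).filter fun χ => .box a χ ∈ msbar φ ∧ χ.md < k

theorem mem_boxBodies {k : ℕ} : χ ∈ boxBodies φ a k ↔ .box a χ ∈ msbar φ ∧ χ.md < k :=
  Finset.mem_filter.trans (and_iff_right_of_imp fun h => mem_msbar_of_box h.1)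

/-- The formula that a modal formula, or its dual, requires of all successors; other formulas are
returned unchanged. -/
def MFormula.boxBody : MFormula Ag PVar → MFormula Ag PVar
  | .box _ χ => χ
  | .dia _ χ => χ.neg
  | ψ => ψ

/- `[a]χ` and its dual `⟨a⟩¬χ` share the body `χ`, so there are at most as many bodies as modal
formulas in `sub(φ)`; some member of `sub(φ)` is not modal. -/
theorem card_boxBodies_lt (φ : MFormula Ag PVar) (a : Ag) (k : ℕ) :
    (boxBodies φ a k).card < msize φ := by
  have hsub : boxBodies φ a k ⊆ ((msub φ).filter fun ψ => ψ.md ≠ 0).image MFormula.boxBody := by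
    intro χ hχ
    rw [Finset.mem_image]
    rcases mem_msbar.mp (mem_boxBodies.mp hχ).1 with h | h
    · exact ⟨_, Finset.mem_filter.mpr ⟨h, Nat.succ_ne_zero _⟩, rfl⟩
    · exact ⟨_, Finset.mem_filter.mpr ⟨h, Nat.succ_ne_zero _⟩, χ.neg_neg⟩
  obtain ⟨ψ, hψ, hψ0⟩ := φ.exists_mem_subList_md_eq_zero
  calc (boxBodies φ a k).card
      ≤ (((msub φ).filter fun ψ => ψ.md ≠ 0).image MFormula.boxBody).card :=
        Finset.card_le_card hsub
    _ ≤ ((msub φ).filter fun ψ => ψ.md ≠ 0).card := Finset.card_image_le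
    _ < msize φ := Finset.card_lt_card
        (Finset.filter_ssubset.mpr ⟨ψ, List.mem_toFinset.mpr hψ, not_not.mpr hψ0⟩)

end Subformulas

theorem mem_sem_of_levels {M M' : KModel Ag PVar} {φ : MFormula Ag PVar}
    (f : M'.W → M.W) (lev : M'.W → ℕ) (hV : ∀ p, M'.V p = M.V (f p))
    (hbox : ∀ a p q χ, .box a χ ∈ msub φ → M'.R a p q → χ.md < lev p →
      f p ∈ MFormula.sem M (.box a χ) → f q ∈ χ.sem M ∧ χ.md ≤ lev q)
    (hdia : ∀ a p χ, .dia a χ ∈ msub φ → χ.md < lev p → f p ∈ MFormula.sem M (.dia a χ) →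
      ∃ q, M'.R a p q ∧ f q ∈ χ.sem M ∧ χ.md ≤ lev q)
    {ψ : MFormula Ag PVar} (hψ : ψ ∈ msub φ) {p : M'.W} (hp : ψ.md ≤ lev p)
    (h : f p ∈ ψ.sem M) : p ∈ ψ.sem M' := by
  induction ψ generalizing p with
  | prop | nprop => simpa [MFormula.sem, hV] using h
  | tt => trivial
  | ff => exact h.elim
  | and ψ₁ ψ₂ ih₁ ih₂ =>
    exact ⟨ih₁ (left_mem_msub_of_and hψ) ((le_max_left _ _).trans hp) h.1,
      ih₂ (right_mem_msub_of_and hψ) ((le_max_right _ _).trans hp) h.2⟩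
  | or ψ₁ ψ₂ ih₁ ih₂ =>
    exact h.imp (ih₁ (left_mem_msub_of_or hψ) ((le_max_left _ _).trans hp))
      (ih₂ (right_mem_msub_of_or hψ) ((le_max_right _ _).trans hp))
  | dia a χ ih =>
    obtain ⟨q, hpq, hq, hlev⟩ := hdia a p χ hψ hp h
    exact ⟨q, hpq, ih (mem_msub_of_dia hψ) hlev hq⟩
  | box a χ ih =>
    intro q hpq
    obtain ⟨hq, hlev⟩ := hbox a p q χ hψ hpq hp h
    exact ih (mem_msub_of_box hψ) hlev hq

/-- Every instance over `s̄ub(φ)` of the axiom for the frame condition `x` and agent `a` holds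
at `s`. -/
def SchemeAt (φ : MFormula Ag PVar) (M : KModel Ag PVar) (a : Ag) (x : FrameCond) (s : M.W) :
    Prop :=
  ∀ ψ ∈ msbar φ, s ∈ (axInst x a ψ).sem M

namespace SchemeAt

variable {φ : MFormula Ag PVar} {M : KModel Ag PVar} {a : Ag} {s t u : M.W}
  {χ : MFormula Ag PVar}

theorem exists_rel (h : SchemeAt φ M a .D s) : ∃ t, M.R a s t :=
  (h φ (mem_msbar_of_mem_msub (mem_msub_self φ))).imp fun _ => And.left

theorem mem_of_box (h : SchemeAt φ M a .T s) (hχ : χ ∈ msbar φ)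
    (hs : s ∈ MFormula.sem M (.box a χ)) : s ∈ χ.sem M :=
  MFormula.mem_sem_impl.mp (h χ hχ) hs

theorem mem_of_rel_of_box (h : SchemeAt φ M a .B s) (hst : M.R a s t) (hχ : χ ∈ msbar φ)
    (ht : t ∈ MFormula.sem M (.box a χ)) : s ∈ χ.sem M :=
  MFormula.mem_sem_impl.mp (h χ hχ) ⟨t, hst, ht⟩

theorem box_box (h : SchemeAt φ M a .four s) (hχ : χ ∈ msbar φ)
    (hs : s ∈ MFormula.sem M (.box a χ)) : s ∈ MFormula.sem M (.box a (.box a χ)) :=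
  MFormula.mem_sem_impl.mp (h χ hχ) hs

theorem box_of_rel (h : SchemeAt φ M a .five s) (hst : M.R a s t) (hχ : χ ∈ msbar φ)
    (ht : t ∈ MFormula.sem M (.box a χ)) : s ∈ MFormula.sem M (.box a χ) :=
  MFormula.mem_sem_impl.mp (h χ hχ) ⟨t, hst, ht⟩

theorem box_neg_box (h : SchemeAt φ M a .five s) (hχ : .box a χ ∈ msbar φ)
    (hs : s ∉ MFormula.sem M (.box a χ)) :
    s ∈ MFormula.sem M (.box a (MFormula.box a χ).neg) := fun _ hst =>
  MFormula.mem_sem_neg.mpr fun ht => hs (h.box_of_rel hst (mem_msbar_of_box hχ) ht)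

theorem box_of_sibling (hs : SchemeAt φ M a .five s) (hu : SchemeAt φ M a .five u)
    (hst : M.R a s t) (hsu : M.R a s u) (hχ : .box a χ ∈ msbar φ)
    (ht : t ∈ MFormula.sem M (.box a χ)) : u ∈ MFormula.sem M (.box a χ) := by
  by_contra hn
  have hs' := hs.box_of_rel hsu (neg_mem_msbar hχ) (hu.box_neg_box hχ hn)
  exact MFormula.mem_sem_neg.mp (hs' t hst) ht

theorem box_of_rel_of_rel (hs : SchemeAt φ M a .five s) (ht : SchemeAt φ M a .five t)
    (hu : SchemeAt φ M a .five u) (hst : M.R a s t) (htu : M.R a t u) (hχ : .box a χ ∈ msbar φ)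
    (hbox : t ∈ MFormula.sem M (.box a χ)) : u ∈ MFormula.sem M (.box a χ) := by
  by_contra hn
  have ht' := ht.box_of_rel htu (neg_mem_msbar hχ) (hu.box_neg_box hχ hn)
  have hs' := hs.box_of_rel hst (neg_mem_msbar hχ) ht'
  exact MFormula.mem_sem_neg.mp (hs' t hst) hbox

theorem box_of_T_five (hT : SchemeAt φ M a .T s) (hs : SchemeAt φ M a .five s)
    (ht : SchemeAt φ M a .five t) (hst : M.R a s t) (hχ : .box a χ ∈ msbar φ)
    (hbox : s ∈ MFormula.sem M (.box a χ)) : t ∈ MFormula.sem M (.box a χ) := by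
  by_contra hn
  have hs' := hs.box_of_rel hst (neg_mem_msbar hχ) (ht.box_neg_box hχ hn)
  exact MFormula.mem_sem_neg.mp (hT.mem_of_box (neg_mem_msbar hχ) hs') hbox

theorem box_of_B_five (hB : SchemeAt φ M a .B s) (ht : SchemeAt φ M a .five t)
    (hst : M.R a s t) (hχ : .box a χ ∈ msbar φ)
    (hbox : s ∈ MFormula.sem M (.box a χ)) : t ∈ MFormula.sem M (.box a χ) := by
  by_contra hn
  have hs' := hB.mem_of_rel_of_box hst (neg_mem_msbar hχ) (ht.box_neg_box hχ hn)
  exact MFormula.mem_sem_neg.mp hs' hbox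

end SchemeAt

section TrueBoxes

variable {φ : MFormula Ag PVar} {M : KModel Ag PVar} {a : Ag} {k : ℕ} {s t u : M.W}
  {χ : MFormula Ag PVar}

open Classical in
/-- The `χ` among `boxBodies φ a k` for which `[a]χ` is true at `s`. -/
noncomputable def trueBoxes (φ : MFormula Ag PVar) (M : KModel Ag PVar) (a : Ag) (k : ℕ)
    (s : M.W) : Finset (MFormula Ag PVar) :=
  (boxBodies φ a k).filter fun χ => s ∈ MFormula.sem M (.box a χ)

open Classical in
/-- The `χ` among `boxBodies φ a k` for which `[a][a]χ` is true at `s`. For euclidean `a` these are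
the true boxes of every successor of `s`. -/
noncomputable def coreBoxes (φ : MFormula Ag PVar) (M : KModel Ag PVar) (a : Ag) (k : ℕ)
    (s : M.W) : Finset (MFormula Ag PVar) :=
  (boxBodies φ a k).filter fun χ => s ∈ MFormula.sem M (.box a (.box a χ))

theorem mem_trueBoxes :
    χ ∈ trueBoxes φ M a k s ↔
      (.box a χ ∈ msbar φ ∧ χ.md < k) ∧ s ∈ MFormula.sem M (.box a χ) := by
  simp only [trueBoxes, Finset.mem_filter, mem_boxBodies]

theorem mem_coreBoxes :
    χ ∈ coreBoxes φ M a k s ↔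
      (.box a χ ∈ msbar φ ∧ χ.md < k) ∧ s ∈ MFormula.sem M (.box a (.box a χ)) := by
  simp only [coreBoxes, Finset.mem_filter, mem_boxBodies]

theorem trueBoxes_subset_boxBodies : trueBoxes φ M a k s ⊆ boxBodies φ a k :=
  fun _ h => mem_boxBodies.mpr (mem_trueBoxes.mp h).1

theorem trueBoxes_zero : trueBoxes φ M a 0 s = ∅ :=
  Finset.eq_empty_of_forall_notMem fun _ h => Nat.not_lt_zero _ (mem_trueBoxes.mp h).1.2

theorem coreBoxes_zero : coreBoxes φ M a 0 s = ∅ :=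
  Finset.eq_empty_of_forall_notMem fun _ h => Nat.not_lt_zero _ (mem_coreBoxes.mp h).1.2

theorem trueBoxes_subset_trueBoxes
    (h : ∀ χ, .box a χ ∈ msbar φ → s ∈ MFormula.sem M (.box a χ) →
      t ∈ MFormula.sem M (.box a χ)) :
    trueBoxes φ M a k s ⊆ trueBoxes φ M a k t := fun χ hχ =>
  have ⟨hmem, hs⟩ := mem_trueBoxes.mp hχ
  mem_trueBoxes.mpr ⟨hmem, h χ hmem.1 hs⟩

theorem mem_sem_dia_of_trueBoxes_subset (h : trueBoxes φ M a k s ⊆ trueBoxes φ M a k t)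
    (hχ : .dia a χ ∈ msbar φ) (hk : χ.md < k) (ht : t ∈ MFormula.sem M (.dia a χ)) :
    s ∈ MFormula.sem M (.dia a χ) := by
  by_contra hs
  have hs' : χ.neg ∈ trueBoxes φ M a k s :=
    mem_trueBoxes.mpr ⟨⟨neg_mem_msbar hχ, by rwa [MFormula.md_neg]⟩,
      MFormula.mem_sem_neg.mpr hs⟩
  exact MFormula.mem_sem_neg.mp (mem_trueBoxes.mp (h hs')).2 ht

namespace SchemeAt

theorem trueBoxes_subset_of_four (hs : SchemeAt φ M a .four s) (hst : M.R a s t) :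
    trueBoxes φ M a k s ⊆ trueBoxes φ M a k t :=
  trueBoxes_subset_trueBoxes fun _ hχ hbox => hs.box_box (mem_msbar_of_box hχ) hbox t hst

theorem trueBoxes_subset_of_five (hs : SchemeAt φ M a .five s) (hst : M.R a s t) :
    trueBoxes φ M a k t ⊆ trueBoxes φ M a k s :=
  trueBoxes_subset_trueBoxes fun _ hχ => hs.box_of_rel hst (mem_msbar_of_box hχ)

theorem trueBoxes_subset_of_B_four (hB : SchemeAt φ M a .B s) (ht : SchemeAt φ M a .four t)
    (hst : M.R a s t) : trueBoxes φ M a k t ⊆ trueBoxes φ M a k s :=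
  trueBoxes_subset_trueBoxes fun _ hχ hbox =>
    hB.mem_of_rel_of_box hst hχ (ht.box_box (mem_msbar_of_box hχ) hbox)

theorem trueBoxes_eq_of_B_five (hB : SchemeAt φ M a .B s) (hs : SchemeAt φ M a .five s)
    (ht : SchemeAt φ M a .five t) (hst : M.R a s t) :
    trueBoxes φ M a k s = trueBoxes φ M a k t :=
  (trueBoxes_subset_trueBoxes fun _ => hB.box_of_B_five ht hst).antisymm
    (hs.trueBoxes_subset_of_five hst)

theorem trueBoxes_eq_of_rel_of_rel (hs : SchemeAt φ M a .five s) (ht : SchemeAt φ M a .five t)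
    (hu : SchemeAt φ M a .five u) (hst : M.R a s t) (htu : M.R a t u) :
    trueBoxes φ M a k u = trueBoxes φ M a k t :=
  (ht.trueBoxes_subset_of_five htu).antisymm
    (trueBoxes_subset_trueBoxes fun _ => hs.box_of_rel_of_rel ht hu hst htu)

theorem trueBoxes_eq_coreBoxes (hs : SchemeAt φ M a .five s)
    (hsucc : ∀ u, M.R a s u → SchemeAt φ M a .five u) (hst : M.R a s t) :
    trueBoxes φ M a k t = coreBoxes φ M a k s := by
  ext χ
  rw [mem_trueBoxes, mem_coreBoxes]
  exact and_congr_right fun hχ =>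
    ⟨fun ht u hsu => hs.box_of_sibling (hsucc u hsu) hst hsu hχ.1 ht, fun h => h t hst⟩

theorem coreBoxes_eq_trueBoxes (hT : SchemeAt φ M a .T s) (hs : SchemeAt φ M a .five s)
    (hsucc : ∀ u, M.R a s u → SchemeAt φ M a .five u) :
    coreBoxes φ M a k s = trueBoxes φ M a k s := by
  ext χ
  rw [mem_trueBoxes, mem_coreBoxes]
  exact and_congr_right fun hχ =>
    ⟨hT.mem_of_box hχ.1, fun h u hsu => hT.box_of_T_five hs (hsucc u hsu) hsu hχ.1 h⟩

end SchemeAt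

end TrueBoxes

section Anchors

variable {L : Ag → Set FrameCond} {φ : MFormula Ag PVar} {M : KModel Ag PVar} {a : Ag} {k m : ℕ}
  {c : Finset (MFormula Ag PVar)} {s t u : M.W}

/-- The accessibility relation of `a` is transitive or euclidean, so boxes of `a` persist along
chains of `a`-steps. -/
def Persistent (L : Ag → Set FrameCond) (a : Ag) : Prop :=
  .four ∈ L a ∨ .five ∈ L a

/-- All axiom instances over `s̄ub(φ)` for the logic `L` hold at `s`. -/
def AxiomsAt (L : Ag → Set FrameCond) (φ : MFormula Ag PVar) (M : KModel Ag PVar) (s : M.W) :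
    Prop :=
  ∀ a, ∀ x ∈ L a, SchemeAt φ M a x s

open Classical in
/-- A quantity that strictly increases along every step of a persistent agent that changes the
true boxes. -/
noncomputable def slack (L : Ag → Set FrameCond) (φ : MFormula Ag PVar) (M : KModel Ag PVar)
    (a : Ag) (k : ℕ) (s : M.W) : ℕ :=
  if .four ∈ L a then (trueBoxes φ M a k s).card
  else if .five ∈ L a then (boxBodies φ a k).card - (trueBoxes φ M a k s).card
  else 0

theorem slack_lt (hm0 : 0 < m) (hm : Persistent L a → msize φ ≤ m) : slack L φ M a k s < m := by
  have hB := card_boxBodies_lt φ a k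
  have hT := Finset.card_le_card (trueBoxes_subset_boxBodies (φ := φ) (a := a) (k := k) (s := s))
  unfold slack
  split_ifs with h4 h5
  · have := hm (.inl h4); omega
  · have := hm (.inr h5); omega
  · exact hm0

theorem slack_lt_slack (hL : Persistent L a) (hs : AxiomsAt L φ M s) (hst : M.R a s t)
    (hne : trueBoxes φ M a k s ≠ trueBoxes φ M a k t) :
    slack L φ M a k s < slack L φ M a k t := by
  unfold slack
  split_ifs with h4 h5
  · exact Finset.card_lt_card (((hs a _ h4).trueBoxes_subset_of_four hst).ssubset_of_ne hne)
  · have hcard := Finset.card_lt_card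
      (((hs a _ h5).trueBoxes_subset_of_five (k := k) hst).ssubset_of_ne hne.symm)
    have := Finset.card_le_card (trueBoxes_subset_boxBodies (φ := φ) (a := a) (k := k) (s := s))
    omega
  · exact (hL.elim h4 h5).elim

/-- A state `s` from whose `a`-successors the `a`-successors of a node of height `k` may be chosen.
The axioms hold far enough around `s` for all changes of the true boxes still to come along `a`, and
for euclidean `a` the set `c` collects the true boxes of the successors of `s`. -/
structure Anchor (L : Ag → Set FrameCond) (φ : MFormula Ag PVar) (M : KModel Ag PVar) (m : ℕ)
    (a : Ag) (k : ℕ) (c : Finset (MFormula Ag PVar)) (s : M.W) : Prop where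
  near : M.HoldsWithin (AxiomsAt L φ M) (k * m - slack L φ M a k s) s
  core : .five ∈ L a → ∀ t, M.R a s t → trueBoxes φ M a k t = c

namespace Anchor

theorem near_succ (h : Anchor L φ M m a (k + 1) c s)
    (hm : ∀ a k s, slack L φ M a k s < m) (hst : M.R a s t) :
    M.HoldsWithin (AxiomsAt L φ M) (k * m) t := by
  have := hm a (k + 1) s
  exact (h.near.anti (k := k * m + 1) (by rw [Nat.succ_mul]; omega)).succ hst

theorem exists_next (h : Anchor L φ M m a (k + 1) c s)
    (hm : ∀ a k s, slack L φ M a k s < m) (hL : Persistent L a) (hst : M.R a s t) :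
    ∃ s', Anchor L φ M m a (k + 1) (trueBoxes φ M a (k + 1) t) s' ∧
      trueBoxes φ M a (k + 1) s' = trueBoxes φ M a (k + 1) t ∧ (s' = t ∨ M.R a s' t) := by
  by_cases heq : trueBoxes φ M a (k + 1) s = trueBoxes φ M a (k + 1) t
  · exact ⟨s, ⟨h.near, fun h5 u hsu => (h.core h5 u hsu).trans (h.core h5 t hst).symm⟩, heq,
      .inr hst⟩
  have hslack := slack_lt_slack hL h.near.self hst heq
  have hlt := hm a (k + 1) t
  have hmul : (k + 1) * m = k * m + m := Nat.succ_mul k m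
  have near_t : M.HoldsWithin (AxiomsAt L φ M) ((k + 1) * m - slack L φ M a (k + 1) s - 1) t :=
    (h.near.anti (by omega)).succ hst
  refine ⟨t, ⟨near_t.anti (by omega), fun h5 u htu => ?_⟩, rfl, .inl rfl⟩
  have near_u : M.HoldsWithin (AxiomsAt L φ M) 0 u := (near_t.anti (by omega)).succ htu
  exact (h.near.self a _ h5).trueBoxes_eq_of_rel_of_rel (near_t.self a _ h5) (near_u.self a _ h5)
    hst htu

end Anchor

end Anchors

section Nodes

variable {L : Ag → Set FrameCond} {φ : MFormula Ag PVar} {M : KModel Ag PVar} {a : Ag} {m : ℕ}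
  {s t : M.W} {χ : MFormula Ag PVar}

/-- A state of the model constructed from `M`: a point of `M`, a level bounding the modal depth of
the formulas whose truth it inherits from that point, and the persistent agent, if any, along whose
relation it was entered. An anchor supplies its successors for that agent. -/
structure Node (L : Ag → Set FrameCond) (φ : MFormula Ag PVar) (M : KModel Ag PVar) (m : ℕ) where
  pt : M.W
  lev : ℕ
  entry : Option Ag
  near : M.HoldsWithin (AxiomsAt L φ M) (lev * m) pt
  anchored : ∀ a, entry = some a → Persistent L a ∧
    ∃ s, Anchor L φ M m a (lev + 1) (trueBoxes φ M a (lev + 1) pt) s ∧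
      trueBoxes φ M a (lev + 1) s = trueBoxes φ M a (lev + 1) pt ∧ (s = pt ∨ M.R a s pt)

namespace Node

/-- The depth below which `[a]`-formulas are transferred along the `a`-edges at `p`. It does not
drop along the edges of a persistent agent. -/
def height (a : Ag) (p : Node L φ M m) : ℕ :=
  if p.entry = some a then p.lev + 1 else p.lev

/-- The bodies of the boxes of `a` that successors of `p` have to respect. -/
noncomputable def boxes (a : Ag) (p : Node L φ M m) : Finset (MFormula Ag PVar) :=
  trueBoxes φ M a (p.height a) p.pt

/-- The boxes of `a` common to all successors of `p`, for euclidean `a`. -/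
noncomputable def core (a : Ag) (p : Node L φ M m) : Finset (MFormula Ag PVar) :=
  if p.entry = some a then p.boxes a else coreBoxes φ M a (p.height a) p.pt

theorem height_of_entry {p : Node L φ M m} (h : p.entry = some a) : p.height a = p.lev + 1 :=
  if_pos h

theorem height_of_not_entry {p : Node L φ M m} (h : p.entry ≠ some a) : p.height a = p.lev :=
  if_neg h

theorem lev_le_height (p : Node L φ M m) : p.lev ≤ p.height a := by
  unfold height; split_ifs <;> omega

theorem height_le (p : Node L φ M m) : p.height a ≤ p.lev + 1 := by
  unfold height; split_ifs <;> omega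

theorem boxes_eq_empty {p : Node L φ M m} (h : p.height a = 0) : p.boxes a = ∅ := by
  rw [boxes, h, trueBoxes_zero]

theorem core_eq_empty {p : Node L φ M m} (h : p.height a = 0) : p.core a = ∅ := by
  rw [core, boxes_eq_empty h, h, coreBoxes_zero, ite_self]

theorem axiomsAt (p : Node L φ M m) : AxiomsAt L φ M p.pt :=
  p.near.self

theorem axiomsAt_of_rel {p : Node L φ M m} (hm : 0 < m) (hp : 0 < p.lev) (h : M.R a p.pt t) :
    AxiomsAt L φ M t :=
  (p.near.anti (k := 0 + 1) (Nat.mul_pos hp hm)).succ h |>.self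

theorem core_eq_boxes {p : Node L φ M m} (hm : 0 < m) (hT : .T ∈ L a) (h5 : .five ∈ L a) :
    p.core a = p.boxes a := by
  rcases Nat.eq_zero_or_pos (p.height a) with h0 | hpos
  · rw [core_eq_empty h0, boxes_eq_empty h0]
  by_cases he : p.entry = some a
  · exact if_pos he
  rw [height_of_not_entry he] at hpos
  rw [core, if_neg he]
  exact (p.axiomsAt a _ hT).coreBoxes_eq_trueBoxes (p.axiomsAt a _ h5)
    fun u hu => axiomsAt_of_rel hm hpos hu a _ h5

theorem exists_anchor (hm : 0 < m) (p : Node L φ M m) (hp : p.height a ≠ 0) :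
    ∃ s, Anchor L φ M m a (p.height a) (p.core a) s ∧
      trueBoxes φ M a (p.height a) s = p.boxes a ∧
      (s = p.pt ∨ Persistent L a ∧ M.R a s p.pt) := by
  by_cases he : p.entry = some a
  · obtain ⟨hL, s, hs, heq, hsp⟩ := p.anchored a he
    rw [core, if_pos he, boxes, height_of_entry he]
    exact ⟨s, hs, heq, hsp.imp_right fun h => ⟨hL, h⟩⟩
  · rw [height_of_not_entry he] at hp
    rw [core, if_neg he, boxes, height_of_not_entry he]
    refine ⟨p.pt, ⟨p.near.anti (Nat.sub_le _ _), fun h5 t ht => ?_⟩, rfl, .inl rfl⟩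
    exact (p.axiomsAt a _ h5).trueBoxes_eq_coreBoxes
      (fun u hu => axiomsAt_of_rel hm (Nat.pos_of_ne_zero hp) hu a _ h5) ht

/-- The part of the `a`-edges from `p` to `q` that depends on their direction: `q` respects the
boxes of `p`, and the data of `p` and `q` are related as transitivity and euclideanness require. -/
structure Link (a : Ag) (p q : Node L φ M m) : Prop where
  height_le : p.height a ≤ q.lev + 1
  mem_sem : ∀ χ ∈ p.boxes a, q.pt ∈ χ.sem M
  height_eq : Persistent L a → p.height a = q.height a
  boxes_subset : .four ∈ L a → p.boxes a ⊆ q.boxes a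
  core_eq : .five ∈ L a → p.core a = q.boxes a ∧ q.core a = q.boxes a ∧ q.boxes a ⊆ p.boxes a

namespace Link

variable {p q r : Node L φ M m}

theorem refl (hm : 0 < m) (hT : .T ∈ L a) (p : Node L φ M m) : Link a p p where
  height_le := p.height_le
  mem_sem _ hχ :=
    have ⟨hmem, hbox⟩ := mem_trueBoxes.mp hχ
    (p.axiomsAt a _ hT).mem_of_box (mem_msbar_of_box hmem.1) hbox
  height_eq _ := rfl
  boxes_subset _ := subset_rfl
  core_eq h5 := ⟨core_eq_boxes hm hT h5, core_eq_boxes hm hT h5, subset_rfl⟩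

theorem of_height_eq_zero (h : p.height a = 0) : Link a p p where
  height_le := p.height_le
  mem_sem χ hχ := by simp [boxes_eq_empty h] at hχ
  height_eq _ := rfl
  boxes_subset _ := subset_rfl
  core_eq _ := by simp [boxes_eq_empty h, core_eq_empty h]

theorem trans (h4 : .four ∈ L a) (hpq : Link a p q) (hqr : Link a q r) : Link a p r where
  height_le := (hpq.height_eq (.inl h4)).trans_le hqr.height_le
  mem_sem χ hχ := hqr.mem_sem χ (hpq.boxes_subset h4 hχ)
  height_eq hL := (hpq.height_eq hL).trans (hqr.height_eq hL)
  boxes_subset _ := (hpq.boxes_subset h4).trans (hqr.boxes_subset h4)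
  core_eq h5 :=
    have ⟨hp, hq, hqp⟩ := hpq.core_eq h5
    have ⟨hq', hr, hrq⟩ := hqr.core_eq h5
    ⟨hp.trans (hq.symm.trans hq'), hr, hrq.trans hqp⟩

theorem eucl (h5 : .five ∈ L a) (hpq : Link a p q) (hpr : Link a p r) : Link a q r :=
  have ⟨hpq', hq, hqp⟩ := hpq.core_eq h5
  have ⟨hpr', hr, _⟩ := hpr.core_eq h5
  have hqr : q.boxes a = r.boxes a := hpq'.symm.trans hpr'
  { height_le := (hpq.height_eq (.inr h5)).symm.trans_le hpr.height_le
    mem_sem := fun χ hχ => hpr.mem_sem χ (hqp hχ)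
    height_eq := fun hL => (hpq.height_eq hL).symm.trans (hpr.height_eq hL)
    boxes_subset := fun _ => hqr.subset
    core_eq := fun _ => ⟨hq.trans hqr, hr, hqr.superset⟩ }

end Link

/-- `q` sits at an `a`-successor of the anchor `s` of `p`, and has the data of such a node. -/
structure IsSuccessor (a : Ag) (p q : Node L φ M m) (s : M.W) : Prop where
  anchor : Anchor L φ M m a (p.height a) (p.core a) s
  boxes_eq : trueBoxes φ M a (p.height a) s = p.boxes a
  anchor_rel : s = p.pt ∨ Persistent L a ∧ M.R a s p.pt
  rel : M.R a s q.pt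
  height_eq : p.height a = q.lev + 1
  entry_iff : q.entry = some a ↔ Persistent L a

theorem exists_isSuccessor (hm : ∀ a k s, slack L φ M a k s < m) (p : Node L φ M m)
    (hp : p.height a ≠ 0) :
    ∃ s, AxiomsAt L φ M s ∧ trueBoxes φ M a (p.height a) s = p.boxes a ∧
      ∀ t, M.R a s t → ∃ q : Node L φ M m, q.pt = t ∧ IsSuccessor a p q s := by
  classical
  obtain ⟨s, hs, hboxes, hsp⟩ := p.exists_anchor (Nat.zero_lt_of_lt (hm a 0 p.pt)) hp
  refine ⟨s, hs.near.self, hboxes, fun t hst => ?_⟩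
  obtain ⟨k, hk : p.height a = k + 1⟩ := Nat.exists_eq_succ_of_ne_zero hp
  have hs' : Anchor L φ M m a (k + 1) (p.core a) s := hk ▸ hs
  refine ⟨⟨t, k, if Persistent L a then some a else none, hs'.near_succ hm hst, fun b hb => ?_⟩,
    rfl, hs, hboxes, hsp, hst, hk, by simp⟩
  split_ifs at hb with hL
  obtain rfl := Option.some.inj hb
  exact ⟨hL, hs'.exists_next hm hL hst⟩

namespace IsSuccessor

variable {p q : Node L φ M m}

theorem height_eq_of_persistent (h : IsSuccessor a p q s) (hL : Persistent L a) :
    q.height a = p.height a :=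
  (height_of_entry (h.entry_iff.mpr hL)).trans h.height_eq.symm

theorem boxes_eq_trueBoxes (h : IsSuccessor a p q s) (hL : Persistent L a) :
    q.boxes a = trueBoxes φ M a (p.height a) q.pt := by
  rw [boxes, h.height_eq_of_persistent hL]

theorem core_eq_boxes (h : IsSuccessor a p q s) (hL : Persistent L a) :
    q.core a = q.boxes a :=
  if_pos (h.entry_iff.mpr hL)

theorem core_eq (h : IsSuccessor a p q s) (h5 : .five ∈ L a) : p.core a = q.boxes a :=
  (h.anchor.core h5 _ h.rel).symm.trans (h.boxes_eq_trueBoxes (.inr h5)).symm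

theorem boxes_subset_of_four (h : IsSuccessor a p q s) (h4 : .four ∈ L a) :
    p.boxes a ⊆ q.boxes a := by
  rw [← h.boxes_eq, h.boxes_eq_trueBoxes (.inl h4)]
  exact (h.anchor.near.self a _ h4).trueBoxes_subset_of_four h.rel

theorem boxes_subset_of_five (h : IsSuccessor a p q s) (h5 : .five ∈ L a) :
    q.boxes a ⊆ p.boxes a := by
  rw [← h.boxes_eq, h.boxes_eq_trueBoxes (.inr h5)]
  exact (h.anchor.near.self a _ h5).trueBoxes_subset_of_five h.rel

theorem boxes_subset_of_B_four (h : IsSuccessor a p q s) (hB : .B ∈ L a) (h4 : .four ∈ L a) :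
    q.boxes a ⊆ p.boxes a := by
  rw [← h.boxes_eq, h.boxes_eq_trueBoxes (.inl h4)]
  exact (h.anchor.near.self a _ hB).trueBoxes_subset_of_B_four (q.axiomsAt a _ h4) h.rel

theorem boxes_eq_of_B_five (h : IsSuccessor a p q s) (hB : .B ∈ L a) (h5 : .five ∈ L a) :
    p.boxes a = q.boxes a := by
  rw [← h.boxes_eq, h.boxes_eq_trueBoxes (.inr h5)]
  exact (h.anchor.near.self a _ hB).trueBoxes_eq_of_B_five (h.anchor.near.self a _ h5)
    (q.axiomsAt a _ h5) h.rel

theorem link (h : IsSuccessor a p q s) : Link a p q where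
  height_le := h.height_eq.le
  mem_sem _ hχ := (mem_trueBoxes.mp (h.boxes_eq ▸ hχ)).2 _ h.rel
  height_eq hL := (h.height_eq_of_persistent hL).symm
  boxes_subset := h.boxes_subset_of_four
  core_eq h5 := ⟨h.core_eq h5, h.core_eq_boxes (.inr h5), h.boxes_subset_of_five h5⟩

theorem mem_sem_of_B (h : IsSuccessor a p q s) (hB : .B ∈ L a) (hχ : χ ∈ q.boxes a) :
    p.pt ∈ χ.sem M := by
  obtain ⟨hmem, hbox⟩ := mem_trueBoxes.mp hχ
  rcases h.anchor_rel with rfl | ⟨hL, hsp⟩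
  · exact (h.anchor.near.self a _ hB).mem_of_rel_of_box h.rel (mem_msbar_of_box hmem.1) hbox
  · have hsub : q.boxes a ⊆ p.boxes a :=
      hL.elim (h.boxes_subset_of_B_four hB) h.boxes_subset_of_five
    exact (mem_trueBoxes.mp (h.boxes_eq ▸ hsub hχ)).2 _ hsp

theorem link_symm (h : IsSuccessor a p q s) (hB : .B ∈ L a) : Link a q p where
  height_le := by
    have := p.height_le (a := a)
    have := q.height_le (a := a)
    have := h.height_eq
    omega
  mem_sem _ := h.mem_sem_of_B hB
  height_eq := h.height_eq_of_persistent
  boxes_subset := h.boxes_subset_of_B_four hB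
  core_eq h5 :=
    have hpq := h.boxes_eq_of_B_five hB h5
    ⟨(h.core_eq_boxes (.inr h5)).trans hpq.symm, (h.core_eq h5).trans hpq.symm, hpq.subset⟩

end IsSuccessor

variable (L φ M m) in
/-- The model constructed from `M`. Symmetry is imposed by requiring links in both directions. -/
def model [h : Nonempty (Node L φ M m)] : KModel Ag PVar where
  W := Node L φ M m
  h_ne := h
  R a p q := Link a p q ∧ (.B ∈ L a → Link a q p)
  V p := M.V p.pt

section Model

variable [Nonempty (Node L φ M m)]

theorem IsSuccessor.model_rel {p q : Node L φ M m} (h : IsSuccessor a p q s) :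
    (model L φ M m).R a p q :=
  ⟨h.link, h.link_symm⟩

theorem exists_model_rel (hm : ∀ a k s, slack L φ M a k s < m) (hD : .D ∈ L a)
    (p : Node L φ M m) : ∃ q, (model L φ M m).R a p q := by
  by_cases h0 : p.height a = 0
  · exact ⟨p, .of_height_eq_zero h0, fun _ => .of_height_eq_zero h0⟩
  obtain ⟨s, hax, -, hnext⟩ := p.exists_isSuccessor hm h0
  obtain ⟨t, hst⟩ := (hax a _ hD).exists_rel
  obtain ⟨q, -, hq⟩ := hnext t hst
  exact ⟨q, hq.model_rel⟩

theorem isLModel_model (hm : ∀ a k s, slack L φ M a k s < m) :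
    IsLModel L (model L φ M m) := by
  rintro a (_ | _ | _ | _ | _) hc
  · exact exists_model_rel hm hc
  · intro p
    have hself := Link.refl (Nat.zero_lt_of_lt (hm a 0 p.pt)) hc p
    exact ⟨hself, fun _ => hself⟩
  · exact fun p q hpq => ⟨hpq.2 hc, fun _ => hpq.1⟩
  · exact fun p q r hpq hqr => ⟨hpq.1.trans hc hqr.1, fun hB => (hqr.2 hB).trans hc (hpq.2 hB)⟩
  · exact fun p q r hpq hpr => ⟨hpq.1.eucl hc hpr.1, fun _ => hpr.1.eucl hc hpq.1⟩

theorem mem_sem_model (hm : ∀ a k s, slack L φ M a k s < m) {p : Node L φ M m}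
    (hp : φ.md ≤ p.lev) (h : p.pt ∈ φ.sem M) : p ∈ φ.sem (model L φ M m) := by
  refine mem_sem_of_levels (M' := model L φ M m) Node.pt Node.lev (fun _ => rfl) ?box ?dia
    (mem_msub_self φ) hp h
  case box =>
    rintro a p q χ hχ ⟨hpq, -⟩ hlev hbox
    have hheight : χ.md < p.height a := hlev.trans_le p.lev_le_height
    exact ⟨hpq.mem_sem χ (mem_trueBoxes.mpr ⟨⟨mem_msbar_of_mem_msub hχ, hheight⟩, hbox⟩),
      Nat.lt_succ_iff.mp (hheight.trans_le hpq.height_le)⟩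
  case dia =>
    intro a p χ hχ hlev hdia
    have hheight : χ.md < p.height a := hlev.trans_le p.lev_le_height
    obtain ⟨s, -, hboxes, hnext⟩ := p.exists_isSuccessor hm (Nat.ne_zero_of_lt hheight)
    obtain ⟨t, hst, ht⟩ := mem_sem_dia_of_trueBoxes_subset hboxes.subset
      (mem_msbar_of_mem_msub hχ) hheight hdia
    obtain ⟨q, rfl, hq⟩ := hnext t hst
    exact ⟨q, hq.model_rel, ht, Nat.lt_succ_iff.mp (hheight.trans_eq hq.height_eq)⟩

end Model

end Node

theorem MSatisfiable.of_holdsWithin (hm0 : 0 < m) (hm : ∀ a, Persistent L a → msize φ ≤ m)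
    {w : M.W} (hax : M.HoldsWithin (AxiomsAt L φ M) (φ.md * m) w) (hw : w ∈ φ.sem M) :
    MSatisfiable L φ := by
  have hslack : ∀ a k s, slack L φ M a k s < m := fun a _ _ => slack_lt hm0 (hm a)
  let root : Node L φ M m := ⟨w, φ.md, none, hax, fun _ h => nomatch h⟩
  have : Nonempty (Node L φ M m) := ⟨root⟩
  exact ⟨Node.model L φ M m, Node.isLModel_model hslack, root,
    Node.mem_sem_model hslack le_rfl hw⟩

end Nodes

theorem msize_pos (φ : MFormula Ag PVar) : 0 < msize φ :=
  Finset.card_pos.mpr ⟨φ, mem_msub_self φ⟩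

theorem mem_sem_translX [Fintype Ag] {M : KModel Ag PVar} {A : Finset Ag} {x : FrameCond}
    {φ : MFormula Ag PVar} {s : M.W} :
    s ∈ (translX A x φ).sem M ↔ s ∈ φ.sem M ∧
      M.HoldsWithin (fun t => ∀ a ∈ A, SchemeAt φ M a x t)
        (φ.md * if x = .four ∨ x = .five then msize φ else 1) s := by
  have hinst : ∀ t, t ∈ (bigAndM ((msbar φ).toList.map
      fun ψ => bigAndM (A.toList.map fun a => axInst x a ψ))).sem M ↔
      ∀ a ∈ A, SchemeAt φ M a x t := fun t => by
    simp only [mem_sem_bigAndM, List.forall_mem_map, Finset.mem_toList, SchemeAt]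
    exact ⟨fun h a ha ψ hψ => h ψ hψ a ha, fun h ψ hψ a ha => h a ha ψ hψ⟩
  simp only [translX, MFormula.sem, Set.mem_inter_iff, mem_sem_invd, hinst, mul_ite, mul_one]

theorem one_step_translation_correct_general [Fintype Ag]
    (A : Finset Ag) (x : FrameCond) (L1 L2 : Ag → Set FrameCond)
    (hA : ∀ a ∈ A, L1 a = L2 a ∪ {x})
    (hA' : ∀ a ∉ A, L1 a = L2 a)
    (hL2 : ∀ a, Persistent L2 a → x = .four ∨ x = .five)
    (φ : MFormula Ag PVar) :
    MSatisfiable L1 φ ↔ MSatisfiable L2 (translX A x φ) := by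
  have mem_L1 : ∀ a c, c ∈ L1 a ↔ c ∈ L2 a ∨ a ∈ A ∧ c = x := fun a c => by
    by_cases ha : a ∈ A
    · simp [hA a ha, ha, or_comm]
    · simp [hA' a ha, ha]
  constructor
  · rintro ⟨M, hM, w, hw⟩
    refine ⟨M, fun a c hc => hM a c ((mem_L1 a c).mpr (.inl hc)), w, mem_sem_translX.mpr ⟨hw, ?_⟩⟩
    exact .of_forall fun t a ha ψ _ =>
      mem_sem_axInst (hM a x ((mem_L1 a x).mpr (.inr ⟨ha, rfl⟩))) ψ t
  · rintro ⟨M, hM, w, hw⟩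
    obtain ⟨hφ, hx⟩ := mem_sem_translX.mp hw
    refine .of_holdsWithin ?_ (fun a hL => ?_) (hx.imp fun t ht a c hc => ?_) hφ
    · split_ifs
      exacts [msize_pos φ, Nat.one_pos]
    · have hpers : x = .four ∨ x = .five := by
        rcases hL with h | h <;> rcases (mem_L1 a _).mp h with h' | ⟨-, rfl⟩
        exacts [hL2 a (.inl h'), .inl rfl, hL2 a (.inr h'), .inr rfl]
      rw [if_pos hpers]
    · rcases (mem_L1 a c).mp hc with hc | ⟨ha, rfl⟩
      exacts [fun ψ _ => mem_sem_axInst (hM a c hc) ψ t, ht a ha]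

/-- correctness of the one-step translation. -/
theorem one_step_translation_correct [Fintype Ag] [Nonempty Ag]
    (A : Finset Ag) (x : FrameCond) (L1 L2 : Ag → Set FrameCond)
    (hA : ∀ a ∈ A, L1 a = L2 a ∪ {x})
    (hA' : ∀ a ∉ A, L1 a = L2 a)
    (hL2 : ∀ (a : Ag), ∀ c ∈ L2 a, condIdx c < condIdx x)
    (φ : MFormula Ag PVar) :
    MSatisfiable L1 φ ↔ MSatisfiable L2 (translX A x φ) := by
  refine one_step_translation_correct_general A x L1 L2 hA hA' (fun a hL => ?_) φ
  rcases hL with h | h <;> have := hL2 a _ h <;> cases x <;> simp_all [condIdx]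
end

section
/- Let M = (W,R,V) be an L-model, w ∈ W, and φ a closed formula such that (M,w) ⊨ φ and each recursion variable of φ is bound by a unique fixed-point subformula. Then there exists an lfp-finite dependency relation on M and φ. -/
/-- Formulas of the multi-agent modal μ-calculus. -/
inductive Formula (Ag PVar LVar : Type) : Type
  | prop  : PVar → Formula Ag PVar LVar
  | nprop : PVar → Formula Ag PVar LVar
  | tt    : Formula Ag PVar LVar
  | ff    : Formula Ag PVar LVar
  | var   : LVar → Formula Ag PVar LVar
  | and   : Formula Ag PVar LVar → Formula Ag PVar LVar → Formula Ag PVar LVar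
  | or    : Formula Ag PVar LVar → Formula Ag PVar LVar → Formula Ag PVar LVar
  | dia   : Ag → Formula Ag PVar LVar → Formula Ag PVar LVar
  | box   : Ag → Formula Ag PVar LVar → Formula Ag PVar LVar
  | mu    : LVar → Formula Ag PVar LVar → Formula Ag PVar LVar
  | nu    : LVar → Formula Ag PVar LVar → Formula Ag PVar LVar
  deriving DecidableEq

variable {Ag PVar LVar : Type}

/-- The μ-calculus semantics of a formula relative to an environment. -/
def Formula.sem [DecidableEq LVar] (M : KModel Ag PVar) :
    Formula Ag PVar LVar → (LVar → Set M.W) → Set M.W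
  | .prop p, _ => {s | p ∈ M.V s}
  | .nprop p, _ => {s | p ∉ M.V s}
  | .tt, _ => Set.univ
  | .ff, _ => ∅
  | .var X, ρ => ρ X
  | .and φ ψ, ρ => Formula.sem M φ ρ ∩ Formula.sem M ψ ρ
  | .or φ ψ, ρ => Formula.sem M φ ρ ∪ Formula.sem M ψ ρ
  | .box a φ, ρ => {s | ∀ t, M.R a s t → t ∈ Formula.sem M φ ρ}
  | .dia a φ, ρ => {s | ∃ t, M.R a s t ∧ t ∈ Formula.sem M φ ρ}
  | .mu X φ, ρ => ⋂₀ {S | Formula.sem M φ (Function.update ρ X S) ⊆ S}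
  | .nu X φ, ρ => ⋃₀ {S | S ⊆ Formula.sem M φ (Function.update ρ X S)}

/-- Free recursion variables of a formula. -/
def Formula.freeVars : Formula Ag PVar LVar → Set LVar
  | .var X => {X}
  | .and φ ψ => Formula.freeVars φ ∪ Formula.freeVars ψ
  | .or φ ψ => Formula.freeVars φ ∪ Formula.freeVars ψ
  | .dia _ φ => Formula.freeVars φ
  | .box _ φ => Formula.freeVars φ
  | .mu X φ => Formula.freeVars φ \ {X}
  | .nu X φ => Formula.freeVars φ \ {X}
  | _ => ∅

/-- A formula is closed when it has no free recursion variables. -/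
def Formula.Closed (φ : Formula Ag PVar LVar) : Prop := φ.freeVars = ∅

/-- A formula is L-satisfiable when it holds at some state of some L-model. -/
def LSatisfiable [DecidableEq LVar] (L : Ag → Set FrameCond)
    (φ : Formula Ag PVar LVar) : Prop :=
  ∃ (M : KModel Ag PVar), IsLModel L M ∧
    ∃ (w : M.W) (ρ : LVar → Set M.W), w ∈ Formula.sem M φ ρ

/-- Finite conjunction of a list of formulas (empty conjunction is tt). -/
def bigAnd : List (Formula Ag PVar LVar) → Formula Ag PVar LVar
  | [] => .tt
  | φ :: l => .and φ (bigAnd l)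

/-- Syntactic negation, defined by the usual dualities. -/
def Formula.neg : Formula Ag PVar LVar → Formula Ag PVar LVar
  | .prop p => .nprop p
  | .nprop p => .prop p
  | .tt => .ff
  | .ff => .tt
  | .var X => .var X
  | .and φ ψ => .or (Formula.neg φ) (Formula.neg ψ)
  | .or φ ψ => .and (Formula.neg φ) (Formula.neg ψ)
  | .dia a φ => .box a (Formula.neg φ)
  | .box a φ => .dia a (Formula.neg φ)
  | .mu X φ => .nu X (Formula.neg φ)
  | .nu X φ => .mu X (Formula.neg φ)

/-- Implication φ → ψ, encoded as ¬φ ∨ ψ. -/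
def Formula.impl (φ ψ : Formula Ag PVar LVar) : Formula Ag PVar LVar := .or φ.neg ψ

/-- The list of subformulas of a formula. -/
def Formula.subList : Formula Ag PVar LVar → List (Formula Ag PVar LVar)
  | .and φ ψ => .and φ ψ :: (Formula.subList φ ++ Formula.subList ψ)
  | .or φ ψ => .or φ ψ :: (Formula.subList φ ++ Formula.subList ψ)
  | .dia a φ => .dia a φ :: Formula.subList φ
  | .box a φ => .box a φ :: Formula.subList φ
  | .mu X φ => .mu X φ :: Formula.subList φ
  | .nu X φ => .nu X φ :: Formula.subList φ
  | φ => [φ]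

/-- The (first) fixed-point subformula binding X, if any. -/
def findFx [DecidableEq LVar] (X : LVar) :
    Formula Ag PVar LVar → Option (Formula Ag PVar LVar)
  | .and φ ψ => (findFx X φ).orElse (fun _ => findFx X ψ)
  | .or φ ψ => (findFx X φ).orElse (fun _ => findFx X ψ)
  | .dia _ φ => findFx X φ
  | .box _ φ => findFx X φ
  | .mu Y φ => if Y = X then some (.mu Y φ) else findFx X φ
  | .nu Y φ => if Y = X then some (.nu Y φ) else findFx X φ
  | _ => none

/-- fx(X): the unique fixed-point subformula of the top formula binding X. -/
def fxOf [DecidableEq LVar] (Φ : Formula Ag PVar LVar) (X : LVar) :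
    Formula Ag PVar LVar :=
  (findFx X Φ).getD (.var X)

/-- Number of binders of the variable X in a formula. -/
def binderCountV [DecidableEq LVar] (X : LVar) : Formula Ag PVar LVar → ℕ
  | .and φ ψ => binderCountV X φ + binderCountV X ψ
  | .or φ ψ => binderCountV X φ + binderCountV X ψ
  | .dia _ φ => binderCountV X φ
  | .box _ φ => binderCountV X φ
  | .mu Y φ => (if Y = X then 1 else 0) + binderCountV X φ
  | .nu Y φ => (if Y = X then 1 else 0) + binderCountV X φ
  | _ => 0

/-- Each recursion variable is bound by at most one fixed-point subformula. -/
def WellNamed [DecidableEq LVar] (φ : Formula Ag PVar LVar) : Prop :=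
  ∀ X : LVar, binderCountV X φ ≤ 1

/-- `D` is a dependency relation on the model M and formula Φ, relative to the
environment ρ interpreting each variable by its binding fixed point. -/
def IsDepRel [DecidableEq LVar] (M : KModel Ag PVar) (Φ : Formula Ag PVar LVar)
    (ρ : LVar → Set M.W)
    (D : M.W × Formula Ag PVar LVar → M.W × Formula Ag PVar LVar → Prop) : Prop :=
  (∀ (u : M.W) (ψ1 ψ2 : Formula Ag PVar LVar), Formula.and ψ1 ψ2 ∈ Φ.subList →
      u ∈ Formula.sem M (Formula.and ψ1 ψ2) ρ →
      D (u, .and ψ1 ψ2) (u, ψ1) ∧ D (u, .and ψ1 ψ2) (u, ψ2)) ∧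
  (∀ (u : M.W) (ψ1 ψ2 : Formula Ag PVar LVar), Formula.or ψ1 ψ2 ∈ Φ.subList →
      u ∈ Formula.sem M (Formula.or ψ1 ψ2) ρ →
      (D (u, .or ψ1 ψ2) (u, ψ1) ∧ u ∈ Formula.sem M ψ1 ρ) ∨
      (D (u, .or ψ1 ψ2) (u, ψ2) ∧ u ∈ Formula.sem M ψ2 ρ)) ∧
  (∀ (u : M.W) (a : Ag) (ψ : Formula Ag PVar LVar), Formula.box a ψ ∈ Φ.subList →
      u ∈ Formula.sem M (Formula.box a ψ) ρ →
      ∀ v : M.W, M.R a u v → D (u, .box a ψ) (v, ψ)) ∧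
  (∀ (u : M.W) (a : Ag) (ψ : Formula Ag PVar LVar), Formula.dia a ψ ∈ Φ.subList →
      u ∈ Formula.sem M (Formula.dia a ψ) ρ →
      ∃ v : M.W, M.R a u v ∧ v ∈ Formula.sem M ψ ρ ∧ D (u, .dia a ψ) (v, ψ)) ∧
  (∀ (u : M.W) (X : LVar) (ψ : Formula Ag PVar LVar), Formula.mu X ψ ∈ Φ.subList →
      u ∈ Formula.sem M (Formula.mu X ψ) ρ → D (u, .mu X ψ) (u, ψ)) ∧
  (∀ (u : M.W) (X : LVar) (ψ : Formula Ag PVar LVar), Formula.nu X ψ ∈ Φ.subList →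
      u ∈ Formula.sem M (Formula.nu X ψ) ρ → D (u, .nu X ψ) (u, ψ)) ∧
  (∀ (u : M.W) (X : LVar), Formula.var X ∈ Φ.subList →
      u ∈ Formula.sem M (Formula.var X) ρ → D (u, .var X) (u, fxOf Φ X))

/-- The restricted relation →_X: drop the edges out of variables Y whose
binding formula fx(Y) is not a subformula of fx(X). -/
def depX [DecidableEq LVar] (M : KModel Ag PVar) (Φ : Formula Ag PVar LVar)
    (D : M.W × Formula Ag PVar LVar → M.W × Formula Ag PVar LVar → Prop)
    (X : LVar) (p1 p2 : M.W × Formula Ag PVar LVar) : Prop :=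
  D p1 p2 ∧ ∀ Y : LVar, p1.2 = Formula.var Y → fxOf Φ Y ∈ (fxOf Φ X).subList

/-- X is a least-fixed-point variable of Φ. -/
def IsLfpVar [DecidableEq LVar] (Φ : Formula Ag PVar LVar) (X : LVar) : Prop :=
  ∃ ψ : Formula Ag PVar LVar, findFx X Φ = some (Formula.mu X ψ)

/-- A dependency relation is lfp-finite when every least-fixed-point variable X
appears only finitely many times on every →_X-sequence. -/
def LfpFinite [DecidableEq LVar] (M : KModel Ag PVar) (Φ : Formula Ag PVar LVar)
    (D : M.W × Formula Ag PVar LVar → M.W × Formula Ag PVar LVar → Prop) : Prop :=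
  ∀ X : LVar, IsLfpVar Φ X →
    ∀ f : ℕ → M.W × Formula Ag PVar LVar,
      (∀ n : ℕ, depX M Φ D X (f n) (f (n + 1))) →
      {n : ℕ | (f n).2 = Formula.var X}.Finite

/-!
The dependency relation is read off from the ordinal approximants of the least fixed points, in the
style of Streett and Emerson. Order the binders of `Φ` from the outside in, and assign to each of
them an ordinal, with which the corresponding least fixed point is replaced by its approximant. The
signature of a true pair `(u, χ)` is the lexicographically least such assignment under which `χ`
still holds at `u`. Choosing disjuncts and successors that remain true under the signature of the
source never increases signatures, except that entering a fixed-point formula resets the component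
of its own binder. Along a `→_X`-sequence that has reached `X`, only binders inside `fx(X)` are
entered again, so the components up to that of `X` do not increase, and unfolding `X` strictly
decreases them: an approximant at `o` unfolds to an approximant at some `b < o`. By lexicographic
well-foundedness, `X` is unfolded only finitely often.
-/

section Order

theorem finite_setOf_succ_lt {α : Type*} [PartialOrder α] [WellFoundedLT α] {m : ℕ → α} {N : ℕ}
    (hm : ∀ n, N ≤ n → m (n + 1) ≤ m n) : {n | N ≤ n ∧ m (n + 1) < m n}.Finite := by
  have anti : Antitone fun i => m (N + i) :=
    antitone_nat_of_succ_le fun i => hm _ (Nat.le_add_right N i)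
  obtain ⟨K, hK⟩ := WellFoundedLT.antitone_chain_condition anti
  refine (Set.finite_Iio (N + K)).subset fun n hn => ?_
  by_contra hle
  obtain ⟨i, rfl⟩ := Nat.exists_eq_add_of_le (not_lt.1 hle)
  have h₀ : m (N + K) = m (N + K + i) := by
    simpa only [add_assoc] using hK (K + i) (Nat.le_add_right K i)
  have h₁ : m (N + K) = m (N + K + i + 1) := by
    simpa only [add_assoc] using hK (K + i + 1) (by omega)
  exact hn.2.ne (h₁.symm.trans h₀)

theorem toLex_domRestrict_Iic_mono {ι : Type*} {α : ι → Type*} [LinearOrder ι]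
    [∀ i, PartialOrder (α i)] {s t : ∀ i, α i} (h : toLex s ≤ toLex t) (k : ι) :
    toLex ((Set.Iic k).domRestrict s) ≤ toLex ((Set.Iic k).domRestrict t) := by
  rcases h.eq_or_lt with heq | ⟨i, hagree, hi⟩
  · exact (congrArg (fun r => toLex ((Set.Iic k).domRestrict (ofLex r))) heq).le
  by_cases hik : i ≤ k
  · exact le_of_lt ⟨⟨i, hik⟩, fun j hj => hagree j hj, hi⟩
  · refine le_of_eq (congrArg toLex (funext fun j => hagree j ?_))
    exact j.2.trans_lt (not_le.1 hik)

theorem domRestrict_Iic_update_of_lt {ι : Type*} {α : ι → Type*} [DecidableEq ι] [Preorder ι]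
    {k i : ι} (h : k < i) (s : ∀ i, α i) (a : α i) :
    (Set.Iic k).domRestrict (Function.update s i a) = (Set.Iic k).domRestrict s :=
  funext fun j => Function.update_of_ne (j.2.trans_lt h).ne a s

theorem toLex_domRestrict_Iic_update_lt {ι : Type*} {α : ι → Type*} [LinearOrder ι]
    [∀ i, PartialOrder (α i)] {k : ι} {s : ∀ i, α i} {a : α k} (h : a < s k) :
    toLex ((Set.Iic k).domRestrict (Function.update s k a)) <
      toLex ((Set.Iic k).domRestrict s) :=
  ⟨⟨k, le_rfl⟩, fun j hj => Function.update_of_ne (Subtype.coe_lt_coe.2 hj).ne a s,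
    by simpa using h⟩

theorem find?_eq_some_of_countP_le_one {α : Type*} {p : α → Bool} {a : α} {l : List α}
    (hl : l.countP p ≤ 1) (ha : a ∈ l) (hp : p a) : l.find? p = some a := by
  induction l with
  | nil => simp at ha
  | cons b l ih => grind [List.countP_eq_zero]

end Order

namespace Formula

section Binders

theorem self_mem_subList (φ : Formula Ag PVar LVar) : φ ∈ φ.subList := by
  cases φ <;> simp [subList]

theorem subList_trans {χ ψ φ : Formula Ag PVar LVar} (h₁ : χ ∈ ψ.subList)
    (h₂ : ψ ∈ φ.subList) : χ ∈ φ.subList := by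
  induction φ <;> simp only [subList, List.mem_cons, List.mem_append, List.not_mem_nil,
    or_false] at h₂ ⊢ <;> grind [subList]

theorem eq_or_sizeOf_lt_of_mem_subList {χ φ : Formula Ag PVar LVar} (h : χ ∈ φ.subList) :
    χ = φ ∨ sizeOf χ < sizeOf φ := by
  induction φ <;> simp only [subList, List.mem_cons, List.mem_append, List.not_mem_nil,
    or_false] at h <;> grind

theorem sizeOf_le_of_mem_subList {χ φ : Formula Ag PVar LVar} (h : χ ∈ φ.subList) :
    sizeOf χ ≤ sizeOf φ := by
  rcases eq_or_sizeOf_lt_of_mem_subList h with rfl | h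
  exacts [le_rfl, h.le]

/-- The operand of a fixed-point formula; every other formula is its own body. -/
def body : Formula Ag PVar LVar → Formula Ag PVar LVar
  | mu _ ψ => ψ
  | nu _ ψ => ψ
  | φ => φ

theorem body_mem_subList (φ : Formula Ag PVar LVar) : φ.body ∈ φ.subList := by
  cases φ <;> simp [body, subList, self_mem_subList]

variable [DecidableEq LVar] {X Y : LVar} {φ χ β Φ : Formula Ag PVar LVar}

/-- Whether a formula is `μX.ψ` or `νX.ψ` for some `ψ`. -/
def bindsVar (X : LVar) : Formula Ag PVar LVar → Bool
  | mu Y _ => Y = X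
  | nu Y _ => Y = X
  | _ => false

theorem bindsVar_iff : bindsVar X β ↔ ∃ ψ, β = mu X ψ ∨ β = nu X ψ := by
  cases β <;> simp [bindsVar, eq_comm]

theorem body_eq_self (h : ∀ X, ¬ bindsVar X φ) : φ.body = φ := by
  cases φ <;> simp_all [body, bindsVar]

theorem sizeOf_body_lt (h : bindsVar X β) : sizeOf β.body < sizeOf β := by
  obtain ⟨ψ, rfl | rfl⟩ := bindsVar_iff.1 h <;> simp [body]

theorem bindsVar_unique (hX : bindsVar X β) (hY : bindsVar Y β) : X = Y := by
  obtain ⟨ψ, rfl | rfl⟩ := bindsVar_iff.1 hX <;> simpa [bindsVar] using hY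

theorem findFx_eq_find? (X : LVar) (φ : Formula Ag PVar LVar) :
    findFx X φ = φ.subList.find? (bindsVar X) := by
  induction φ <;> grind [findFx, subList, bindsVar]

theorem binderCountV_eq_countP (X : LVar) (φ : Formula Ag PVar LVar) :
    binderCountV X φ = φ.subList.countP (bindsVar X) := by
  induction φ <;> simp_all [binderCountV, subList, bindsVar, List.countP_cons, add_comm]

/-- The recursion variables that some fixed-point subformula of `Φ` binds. -/
def boundVars (Φ : Formula Ag PVar LVar) : Set LVar :=
  {X | ∃ β ∈ Φ.subList, bindsVar X β}

theorem findFx_eq_some (hΦ : WellNamed Φ) (hβ : β ∈ Φ.subList) (hX : bindsVar X β) :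
    findFx X Φ = some β := by
  rw [findFx_eq_find?]
  exact find?_eq_some_of_countP_le_one ((binderCountV_eq_countP X Φ).symm.trans_le (hΦ X)) hβ hX

theorem fxOf_eq (hΦ : WellNamed Φ) (hβ : β ∈ Φ.subList) (hX : bindsVar X β) :
    fxOf Φ X = β := by
  simp [fxOf, findFx_eq_some hΦ hβ hX]

theorem findFx_eq_some_fxOf (hX : X ∈ Φ.boundVars) : findFx X Φ = some (fxOf Φ X) := by
  obtain ⟨β, hβ, hXβ⟩ := hX
  obtain ⟨γ, hγ⟩ := Option.isSome_iff_exists.1 (List.find?_isSome.2 ⟨β, hβ, hXβ⟩)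
  rw [fxOf, findFx_eq_find?, hγ, Option.getD_some]

theorem fxOf_mem_subList (hX : X ∈ Φ.boundVars) : fxOf Φ X ∈ Φ.subList :=
  List.mem_of_find?_eq_some ((findFx_eq_find? X Φ).symm.trans (findFx_eq_some_fxOf hX))

theorem bindsVar_fxOf (hX : X ∈ Φ.boundVars) : bindsVar X (fxOf Φ X) :=
  List.find?_some ((findFx_eq_find? X Φ).symm.trans (findFx_eq_some_fxOf hX))

theorem mem_freeVars_or_exists_binder (hχ : χ ∈ φ.subList) (hY : Y ∈ χ.freeVars) :
    Y ∈ φ.freeVars ∨ ∃ β ∈ φ.subList, bindsVar Y β ∧ χ ∈ β.body.subList := by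
  induction φ with
  | mu Z ψ ih | nu Z ψ ih =>
    rcases List.mem_cons.1 hχ with rfl | hχ
    · exact .inl hY
    by_cases hYZ : Z = Y
    · exact .inr ⟨_, self_mem_subList _, by simpa [bindsVar] using hYZ, hχ⟩
    · rcases ih hχ with hY | ⟨β, hβ, h⟩
      exacts [.inl ⟨hY, Ne.symm hYZ⟩, .inr ⟨β, List.mem_cons_of_mem _ hβ, h⟩]
  | _ =>
    simp only [subList, List.mem_cons, List.mem_append, List.not_mem_nil, or_false] at hχ ⊢
    grind [freeVars]

theorem mem_boundVars_and_mem_subList_body_fxOf (hc : Φ.Closed) (hwn : WellNamed Φ)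
    (hχ : χ ∈ Φ.subList) (hY : Y ∈ χ.freeVars) :
    Y ∈ Φ.boundVars ∧ χ ∈ (fxOf Φ Y).body.subList := by
  rcases mem_freeVars_or_exists_binder hχ hY with hY | ⟨β, hβ, hYβ, hχβ⟩
  · exact absurd hY (hc ▸ Set.notMem_empty Y)
  · exact ⟨⟨β, hβ, hYβ⟩, (fxOf_eq hwn hβ hYβ).symm ▸ hχβ⟩

theorem mem_boundVars_of_isLfpVar (h : IsLfpVar Φ X) : X ∈ Φ.boundVars := by
  obtain ⟨ψ, hψ⟩ := h
  rw [findFx_eq_find?] at hψ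
  exact ⟨_, List.mem_of_find?_eq_some hψ, List.find?_some hψ⟩

/-- The nesting level of `fx(X)` in `Φ`: inner binders have larger levels. Size differences are
used in place of nesting depth. -/
noncomputable def level (Φ : Formula Ag PVar LVar) (X : LVar) : Fin (sizeOf Φ + 1) :=
  ⟨sizeOf Φ - sizeOf (fxOf Φ X), Nat.lt_succ_of_le (Nat.sub_le _ _)⟩

theorem level_lt_of_sizeOf_lt (hX : X ∈ Φ.boundVars)
    (h : sizeOf (fxOf Φ Y) < sizeOf (fxOf Φ X)) : Φ.level X < Φ.level Y :=
  Nat.sub_lt_sub_left (h.trans_le (sizeOf_le_of_mem_subList (fxOf_mem_subList hX))) h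

theorem level_lt_of_mem_freeVars_fxOf (hc : Φ.Closed) (hwn : WellNamed Φ)
    (hX : X ∈ Φ.boundVars) (hY : Y ∈ (fxOf Φ X).freeVars) : Φ.level Y < Φ.level X := by
  obtain ⟨hYb, hsub⟩ :=
    mem_boundVars_and_mem_subList_body_fxOf hc hwn (fxOf_mem_subList hX) hY
  exact level_lt_of_sizeOf_lt hYb
    ((sizeOf_le_of_mem_subList hsub).trans_lt (sizeOf_body_lt (bindsVar_fxOf hYb)))

end Binders

section Semantics

variable [DecidableEq LVar] {M : KModel Ag PVar} {X : LVar} {β : Formula Ag PVar LVar}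

theorem sem_mono {ψ : Formula Ag PVar LVar} {ρ₁ ρ₂ : LVar → Set M.W}
    (h : ∀ Y ∈ ψ.freeVars, ρ₁ Y ⊆ ρ₂ Y) : ψ.sem M ρ₁ ⊆ ψ.sem M ρ₂ := by
  induction ψ generalizing ρ₁ ρ₂ with
  | prop | nprop | tt | ff => exact subset_rfl
  | var X => exact h X rfl
  | and a b iha ihb =>
    exact Set.inter_subset_inter (iha fun Y hY => h Y (.inl hY)) (ihb fun Y hY => h Y (.inr hY))
  | or a b iha ihb =>
    exact Set.union_subset_union (iha fun Y hY => h Y (.inl hY)) (ihb fun Y hY => h Y (.inr hY))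
  | dia α a ih => exact fun s ⟨t, hst, ht⟩ => ⟨t, hst, ih h ht⟩
  | box α a ih => exact fun s hs t hst => ih h (hs t hst)
  | mu X a ih =>
    refine Set.sInter_subset_sInter fun S hS => (ih fun Y hY => ?_).trans hS
    by_cases hYX : Y = X
    · simp [hYX]
    · simpa [hYX] using h Y ⟨hY, hYX⟩
  | nu X a ih =>
    refine Set.sUnion_subset_sUnion fun S hS => Set.Subset.trans hS (ih fun Y hY => ?_)
    by_cases hYX : Y = X
    · simp [hYX]
    · simpa [hYX] using h Y ⟨hY, hYX⟩

theorem sem_congr {ψ : Formula Ag PVar LVar} {ρ₁ ρ₂ : LVar → Set M.W}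
    (h : ∀ Y ∈ ψ.freeVars, ρ₁ Y = ρ₂ Y) : ψ.sem M ρ₁ = ψ.sem M ρ₂ :=
  (sem_mono fun Y hY => (h Y hY).subset).antisymm (sem_mono fun Y hY => (h Y hY).superset)

/-- The operator whose extremal fixed points interpret `μX.ψ` and `νX.ψ`. -/
def semHom (M : KModel Ag PVar) (ρ : LVar → Set M.W) (X : LVar) (ψ : Formula Ag PVar LVar) :
    Set M.W →o Set M.W where
  toFun S := ψ.sem M (Function.update ρ X S)
  monotone' S T hST := sem_mono fun Y _ => by
    by_cases hYX : Y = X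
    · simpa [hYX] using hST
    · simp [hYX]

theorem semHom_congr {ψ : Formula Ag PVar LVar} {ρ₁ ρ₂ : LVar → Set M.W}
    (h : ∀ Y ∈ ψ.freeVars \ {X}, ρ₁ Y = ρ₂ Y) : semHom M ρ₁ X ψ = semHom M ρ₂ X ψ :=
  OrderHom.ext _ _ <| funext fun S => sem_congr fun Y hY => by
    by_cases hYX : Y = X
    · simp [hYX]
    · simpa [hYX] using h Y ⟨hY, hYX⟩

theorem sem_mu_eq_lfp (ρ : LVar → Set M.W) (X : LVar) (ψ : Formula Ag PVar LVar) :
    (mu X ψ).sem M ρ = (semHom M ρ X ψ).lfp := rfl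

theorem sem_nu_eq_gfp (ρ : LVar → Set M.W) (X : LVar) (ψ : Formula Ag PVar LVar) :
    (nu X ψ).sem M ρ = (semHom M ρ X ψ).gfp := rfl

theorem sem_body_update (hβ : bindsVar X β) (ρ : LVar → Set M.W) :
    β.body.sem M (Function.update ρ X (β.sem M ρ)) = β.sem M ρ := by
  obtain ⟨ψ, rfl | rfl⟩ := bindsVar_iff.1 hβ
  · rw [sem_mu_eq_lfp]
    exact (semHom M ρ X ψ).map_lfp
  · rw [sem_nu_eq_gfp]
    exact (semHom M ρ X ψ).map_gfp

theorem sem_body_eq_sem (hβ : bindsVar X β) {ρ : LVar → Set M.W} (hρ : ρ X = β.sem M ρ) :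
    β.body.sem M ρ = β.sem M ρ := by
  simpa only [← hρ, Function.update_eq_self] using sem_body_update hβ ρ

theorem mem_freeVars_of_mem_freeVars_body {Y : LVar} (hβ : bindsVar X β)
    (hY : Y ∈ β.body.freeVars) (hYX : Y ≠ X) : Y ∈ β.freeVars := by
  obtain ⟨ψ, rfl | rfl⟩ := bindsVar_iff.1 hβ <;> exact ⟨hY, hYX⟩

/-- An ordinal index at which every `lfpApprox` sequence on the state sets of `M` is constant. -/
noncomputable def closureOrdinal (M : KModel Ag PVar) : Ordinal.{0} :=
  (Order.succ (Cardinal.mk (Set M.W))).ord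

/-- The `o`-th approximant from below of a least fixed point; the exact semantics of every other
formula. -/
noncomputable def approxSem (M : KModel Ag PVar) (o : Ordinal.{0}) (ρ : LVar → Set M.W) :
    Formula Ag PVar LVar → Set M.W
  | mu X ψ => OrdinalApprox.lfpApprox (semHom M ρ X ψ) ⊥ o
  | φ => φ.sem M ρ

theorem approxSem_congr {o : Ordinal.{0}} {ρ₁ ρ₂ : LVar → Set M.W}
    (h : ∀ Y ∈ β.freeVars, ρ₁ Y = ρ₂ Y) : approxSem M o ρ₁ β = approxSem M o ρ₂ β := by
  cases β with
  | mu X ψ => exact congrArg (OrdinalApprox.lfpApprox · ⊥ o) (semHom_congr h)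
  | _ => exact sem_congr h

theorem approxSem_subset_sem (o : Ordinal.{0}) (ρ : LVar → Set M.W) (β : Formula Ag PVar LVar) :
    approxSem M o ρ β ⊆ β.sem M ρ := by
  cases β with
  | mu X ψ =>
    rw [sem_mu_eq_lfp]
    exact OrdinalApprox.lfpApprox_le_of_mem_fixedPoints _ (semHom M ρ X ψ).map_lfp bot_le o
  | _ => exact subset_rfl

theorem approxSem_closureOrdinal (ρ : LVar → Set M.W) (β : Formula Ag PVar LVar) :
    approxSem M (closureOrdinal M) ρ β = β.sem M ρ := by
  cases β with
  | mu X ψ =>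
    rw [sem_mu_eq_lfp]
    exact OrdinalApprox.lfpApprox_ord_eq_lfp (semHom M ρ X ψ)
  | _ => rfl

theorem exists_lt_mem_sem_of_mem_approxSem_mu {u : M.W} {o : Ordinal.{0}} {ρ : LVar → Set M.W}
    {ψ : Formula Ag PVar LVar} (hu : u ∈ approxSem M o ρ (mu X ψ)) :
    ∃ b < o, u ∈ ψ.sem M (Function.update ρ X (approxSem M b ρ (mu X ψ))) := by
  simp only [approxSem] at hu ⊢
  rw [OrdinalApprox.lfpApprox] at hu
  simp only [bot_sup_eq, Set.iSup_eq_iUnion, Set.mem_iUnion, exists_prop] at hu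
  exact hu

end Semantics

section Signatures

variable [DecidableEq LVar] {M : KModel Ag PVar} {Φ : Formula Ag PVar LVar} {u : M.W}
  {s t : Fin (sizeOf Φ + 1) → Ordinal.{0}} {ρ : LVar → Set M.W}

/-- The environment interpreting each variable `X` by its binding formula, with the least fixed
points at nesting level `i` replaced by their `s i`-th approximants. -/
noncomputable def approxEnv (M : KModel Ag PVar) (Φ : Formula Ag PVar LVar)
    (s : Fin (sizeOf Φ + 1) → Ordinal.{0}) (X : LVar) : Set M.W :=
  approxSem M (s (Φ.level X))
    (fun Y => if Φ.level Y < Φ.level X then approxEnv M Φ s Y else ∅) (fxOf Φ X)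
termination_by Φ.level X

theorem approxEnv_congr {X : LVar} (h : ∀ i ≤ Φ.level X, s i = t i) :
    approxEnv M Φ s X = approxEnv M Φ t X := by
  rw [approxEnv, approxEnv, h _ le_rfl]
  refine approxSem_congr fun Y _ => ?_
  split_ifs with hY
  · exact approxEnv_congr fun i hi => h i (hi.trans hY.le)
  · rfl
termination_by Φ.level X

theorem approxEnv_eq {X : LVar} (hc : Φ.Closed) (hwn : WellNamed Φ) (hX : X ∈ Φ.boundVars) :
    approxEnv M Φ s X = approxSem M (s (Φ.level X)) (approxEnv M Φ s) (fxOf Φ X) := by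
  rw [approxEnv]
  exact approxSem_congr fun Y hY => if_pos (level_lt_of_mem_freeVars_fxOf hc hwn hX hY)

theorem approxEnv_subset {X : LVar} (hc : Φ.Closed) (hwn : WellNamed Φ)
    (hρ : ∀ Y ∈ Φ.boundVars, ρ Y = (fxOf Φ Y).sem M ρ) (hX : X ∈ Φ.boundVars) :
    approxEnv M Φ s X ⊆ ρ X := by
  rw [approxEnv_eq hc hwn hX, hρ X hX]
  refine (approxSem_subset_sem _ _ _).trans (sem_mono fun Y hY => ?_)
  have := level_lt_of_mem_freeVars_fxOf hc hwn hX hY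
  exact approxEnv_subset hc hwn hρ
    (mem_boundVars_and_mem_subList_body_fxOf hc hwn (fxOf_mem_subList hX) hY).1
termination_by Φ.level X

theorem approxEnv_closureOrdinal {X : LVar} (hc : Φ.Closed) (hwn : WellNamed Φ)
    (hρ : ∀ Y ∈ Φ.boundVars, ρ Y = (fxOf Φ Y).sem M ρ) (hX : X ∈ Φ.boundVars) :
    approxEnv M Φ (fun _ => closureOrdinal M) X = ρ X := by
  rw [approxEnv_eq hc hwn hX, approxSem_closureOrdinal, hρ X hX]
  refine sem_congr fun Y hY => ?_
  have := level_lt_of_mem_freeVars_fxOf hc hwn hX hY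
  exact approxEnv_closureOrdinal hc hwn hρ
    (mem_boundVars_and_mem_subList_body_fxOf hc hwn (fxOf_mem_subList hX) hY).1
termination_by Φ.level X

variable {X : LVar}

theorem sem_body_approxEnv_update (hc : Φ.Closed) (hwn : WellNamed Φ) (hX : X ∈ Φ.boundVars)
    (s : Fin (sizeOf Φ + 1) → Ordinal.{0}) (o : Ordinal.{0}) :
    (fxOf Φ X).body.sem M (approxEnv M Φ (Function.update s (Φ.level X) o)) =
      (fxOf Φ X).body.sem M (Function.update (approxEnv M Φ s) X
        (approxSem M o (approxEnv M Φ s) (fxOf Φ X))) := by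
  have outer : ∀ Y ∈ (fxOf Φ X).freeVars,
      approxEnv M Φ (Function.update s (Φ.level X) o) Y = approxEnv M Φ s Y := fun Y hY =>
    approxEnv_congr fun i hi => Function.update_of_ne
      (hi.trans_lt (level_lt_of_mem_freeVars_fxOf hc hwn hX hY)).ne _ _
  refine sem_congr fun Y hY => ?_
  by_cases hYX : Y = X
  · rw [hYX, Function.update_self, approxEnv_eq hc hwn hX, Function.update_self]
    exact approxSem_congr outer
  · rw [Function.update_of_ne hYX]
    exact outer Y (mem_freeVars_of_mem_freeVars_body (bindsVar_fxOf hX) hY hYX)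

theorem mem_sem_body_approxEnv_update_closureOrdinal (hc : Φ.Closed) (hwn : WellNamed Φ)
    (hX : X ∈ Φ.boundVars) (hu : u ∈ (fxOf Φ X).sem M (approxEnv M Φ s)) :
    u ∈ (fxOf Φ X).body.sem M
      (approxEnv M Φ (Function.update s (Φ.level X) (closureOrdinal M))) := by
  rwa [sem_body_approxEnv_update hc hwn hX, approxSem_closureOrdinal,
    sem_body_update (bindsVar_fxOf hX)]

theorem exists_lt_mem_sem_body_approxEnv_update (hc : Φ.Closed) (hwn : WellNamed Φ)
    (hX : IsLfpVar Φ X) (hu : u ∈ approxEnv M Φ s X) :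
    ∃ b < s (Φ.level X),
      u ∈ (fxOf Φ X).body.sem M (approxEnv M Φ (Function.update s (Φ.level X) b)) := by
  have hXb := mem_boundVars_of_isLfpVar hX
  obtain ⟨ψ, hψ⟩ := hX
  have hfx : fxOf Φ X = mu X ψ := by rw [fxOf, hψ, Option.getD_some]
  rw [approxEnv_eq hc hwn hXb, hfx] at hu
  obtain ⟨b, hb, hub⟩ := exists_lt_mem_sem_of_mem_approxSem_mu hu
  refine ⟨b, hb, ?_⟩
  rwa [sem_body_approxEnv_update hc hwn hXb, hfx]

theorem sem_approxEnv_subset_sem {χ : Formula Ag PVar LVar} (hc : Φ.Closed) (hwn : WellNamed Φ)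
    (hρ : ∀ Y ∈ Φ.boundVars, ρ Y = (fxOf Φ Y).sem M ρ) (hχ : χ ∈ Φ.subList) :
    χ.sem M (approxEnv M Φ s) ⊆ χ.sem M ρ :=
  sem_mono fun _ hY => approxEnv_subset hc hwn hρ
    (mem_boundVars_and_mem_subList_body_fxOf hc hwn hχ hY).1

theorem sem_body_approxEnv_closureOrdinal {χ : Formula Ag PVar LVar} (hc : Φ.Closed)
    (hwn : WellNamed Φ) (hρ : ∀ Y ∈ Φ.boundVars, ρ Y = (fxOf Φ Y).sem M ρ)
    (hχ : χ ∈ Φ.subList) :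
    χ.body.sem M (approxEnv M Φ fun _ => closureOrdinal M) = χ.sem M ρ := by
  have body_eq : χ.body.sem M ρ = χ.sem M ρ := by
    by_cases hbind : ∃ X, bindsVar X χ
    · obtain ⟨X, hX⟩ := hbind
      exact sem_body_eq_sem hX (fxOf_eq hwn hχ hX ▸ hρ X ⟨χ, hχ, hX⟩)
    · rw [body_eq_self (not_exists.1 hbind)]
  rw [← body_eq]
  exact sem_congr fun Y hY => approxEnv_closureOrdinal hc hwn hρ
    (mem_boundVars_and_mem_subList_body_fxOf hc hwn (subList_trans (body_mem_subList χ) hχ) hY).1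

/-- The signature of `(u, χ)`: the lexicographically least approximation of the least fixed
points of `Φ` under which `u` satisfies `χ`, outermost binders first. A fixed-point formula is
read through its body, so that its own approximant is a component of its signature. It is junk
when no approximation makes `u` satisfy `χ`. -/
noncomputable def signature (M : KModel Ag PVar) (Φ : Formula Ag PVar LVar)
    (p : M.W × Formula Ag PVar LVar) : Fin (sizeOf Φ + 1) → Ordinal.{0} :=
  ofLex (Classical.epsilon
    (Minimal fun s => p.1 ∈ p.2.body.sem M (approxEnv M Φ (ofLex s))))

variable {p : M.W × Formula Ag PVar LVar}

theorem minimal_signature (h : p.1 ∈ p.2.body.sem M (approxEnv M Φ s)) :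
    Minimal (fun t => p.1 ∈ p.2.body.sem M (approxEnv M Φ (ofLex t)))
      (toLex (signature M Φ p)) :=
  Classical.epsilon_spec (exists_minimal_of_wellFoundedLT _ ⟨toLex s, h⟩)

theorem mem_sem_body_signature (h : p.1 ∈ p.2.body.sem M (approxEnv M Φ s)) :
    p.1 ∈ p.2.body.sem M (approxEnv M Φ (signature M Φ p)) :=
  (minimal_signature h).prop

theorem signature_le (h : p.1 ∈ p.2.body.sem M (approxEnv M Φ s)) :
    toLex (signature M Φ p) ≤ toLex s :=
  (minimal_signature h).le h

/-- The components of the signature of `p` at the levels of `X` and of the binders around it. -/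
noncomputable def signatureUpTo (M : KModel Ag PVar) (Φ : Formula Ag PVar LVar) (X : LVar)
    (p : M.W × Formula Ag PVar LVar) : Lex (Set.Iic (Φ.level X) → Ordinal.{0}) :=
  toLex ((Set.Iic (Φ.level X)).domRestrict (signature M Φ p))

end Signatures

section Dependency

variable [DecidableEq LVar] {M : KModel Ag PVar} {Φ : Formula Ag PVar LVar} {X : LVar}
  {p q : M.W × Formula Ag PVar LVar} {ρ : LVar → Set M.W}

/-- The moves of the evaluation game of `Φ` on `M`. -/
inductive Move (M : KModel Ag PVar) (Φ : Formula Ag PVar LVar) :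
    M.W × Formula Ag PVar LVar → M.W × Formula Ag PVar LVar → Prop
  | andLeft (u φ ψ) : Move M Φ (u, and φ ψ) (u, φ)
  | andRight (u φ ψ) : Move M Φ (u, and φ ψ) (u, ψ)
  | orLeft (u φ ψ) : Move M Φ (u, or φ ψ) (u, φ)
  | orRight (u φ ψ) : Move M Φ (u, or φ ψ) (u, ψ)
  | box {u v a} (ψ) : M.R a u v → Move M Φ (u, box a ψ) (v, ψ)
  | dia {u v a} (ψ) : M.R a u v → Move M Φ (u, dia a ψ) (v, ψ)
  | mu (u X ψ) : Move M Φ (u, mu X ψ) (u, ψ)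
  | nu (u X ψ) : Move M Φ (u, nu X ψ) (u, ψ)
  | var (u X) : Move M Φ (u, var X) (u, fxOf Φ X)

theorem Move.var_or_subformula (h : Move M Φ p q) :
    (∃ Y, p.2 = Formula.var Y ∧ q = (p.1, fxOf Φ Y)) ∨
      q.2 ∈ p.2.subList ∧ sizeOf q.2 < sizeOf p.2 := by
  cases h with
  | var u Y => exact .inl ⟨Y, rfl, rfl⟩
  | _ => exact .inr ⟨by simp [subList, self_mem_subList], by simp <;> omega⟩

/-- The dependency relation on `M` and `Φ` that keeps the moves along which the truth of the
target is witnessed by the signature of the source. -/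
structure SignatureDep (M : KModel Ag PVar) (Φ : Formula Ag PVar LVar)
    (p q : M.W × Formula Ag PVar LVar) : Prop where
  mem_subList : p.2 ∈ Φ.subList
  move : Move M Φ p q
  source : p.1 ∈ p.2.body.sem M (approxEnv M Φ (signature M Φ p))
  target : q.1 ∈ q.2.sem M (approxEnv M Φ (signature M Φ p))

theorem isDepRel_signatureDep (hc : Φ.Closed) (hwn : WellNamed Φ)
    (hρ : ∀ Y ∈ Φ.boundVars, ρ Y = (fxOf Φ Y).sem M ρ) :
    IsDepRel M Φ ρ (SignatureDep M Φ) := by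
  have source {u χ} (hχ : χ ∈ Φ.subList) (hu : u ∈ χ.sem M ρ) :
      u ∈ χ.body.sem M (approxEnv M Φ (signature M Φ (u, χ))) :=
    mem_sem_body_signature (p := (u, χ))
      ((sem_body_approxEnv_closureOrdinal hc hwn hρ hχ).symm ▸ hu)
  have sound {u χ ψ s} (hχ : χ ∈ Φ.subList) (hψ : ψ ∈ χ.subList)
      (hu : u ∈ ψ.sem M (approxEnv M Φ s)) : u ∈ ψ.sem M ρ :=
    sem_approxEnv_subset_sem hc hwn hρ (subList_trans hψ hχ) hu
  refine ⟨fun u φ ψ h hu => ?_, fun u φ ψ h hu => ?_, fun u a ψ h hu v huv => ?_,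
    fun u a ψ h hu => ?_, fun u X ψ h hu => ?_, fun u X ψ h hu => ?_, fun u X h hu => ?_⟩
  · exact ⟨⟨h, .andLeft u φ ψ, source h hu, (source h hu).1⟩,
      ⟨h, .andRight u φ ψ, source h hu, (source h hu).2⟩⟩
  · rcases source h hu with hφ | hψ
    · exact .inl ⟨⟨h, .orLeft u φ ψ, source h hu, hφ⟩,
        sound h (by simp [subList, self_mem_subList]) hφ⟩
    · exact .inr ⟨⟨h, .orRight u φ ψ, source h hu, hψ⟩,
        sound h (by simp [subList, self_mem_subList]) hψ⟩
  · exact ⟨h, .box ψ huv, source h hu, source h hu v huv⟩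
  · obtain ⟨v, huv, hv⟩ := source h hu
    exact ⟨v, huv, sound h (by simp [subList, self_mem_subList]) hv,
      h, .dia ψ huv, source h hu, hv⟩
  · exact ⟨h, .mu u X ψ, source h hu, source h hu⟩
  · exact ⟨h, .nu u X ψ, source h hu, source h hu⟩
  · have hX := (mem_boundVars_and_mem_subList_body_fxOf hc hwn h (Set.mem_singleton X)).1
    exact ⟨h, .var u X, source h hu,
      approxSem_subset_sem _ _ _ ((approxEnv_eq hc hwn hX).subset (source h hu))⟩

theorem signatureUpTo_le_of_mem_subList (hc : Φ.Closed) (hwn : WellNamed Φ)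
    (hX : X ∈ Φ.boundVars) (hpq : SignatureDep M Φ p q) (hq : q.2 ∈ (fxOf Φ X).subList)
    (hne : q.2 ≠ fxOf Φ X) : signatureUpTo M Φ X q ≤ signatureUpTo M Φ X p := by
  by_cases hbind : ∃ Y, bindsVar Y q.2
  · obtain ⟨Y, hY⟩ := hbind
    have hqΦ := subList_trans hq (fxOf_mem_subList hX)
    have hfx : fxOf Φ Y = q.2 := fxOf_eq hwn hqΦ hY
    have hlevel : Φ.level X < Φ.level Y :=
      level_lt_of_sizeOf_lt hX (hfx ▸ (eq_or_sizeOf_lt_of_mem_subList hq).resolve_left hne)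
    have htarget := mem_sem_body_approxEnv_update_closureOrdinal hc hwn ⟨q.2, hqΦ, hY⟩
      (hfx.symm ▸ hpq.target)
    have hle := toLex_domRestrict_Iic_mono (signature_le (hfx ▸ htarget)) (Φ.level X)
    rwa [domRestrict_Iic_update_of_lt hlevel] at hle
  · refine toLex_domRestrict_Iic_mono (signature_le ?_) _
    rw [body_eq_self (not_exists.1 hbind)]
    exact hpq.target

theorem signatureUpTo_lt_of_eq_var (hc : Φ.Closed) (hwn : WellNamed Φ) (hX : IsLfpVar Φ X)
    (hpq : SignatureDep M Φ p q) (hp : p.2 = var X) :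
    signatureUpTo M Φ X q < signatureUpTo M Φ X p := by
  obtain ⟨u, _⟩ := p
  subst hp
  obtain ⟨_, move, source, -⟩ := hpq
  cases move
  obtain ⟨b, hb, hub⟩ := exists_lt_mem_sem_body_approxEnv_update hc hwn hX source
  exact (toLex_domRestrict_Iic_mono (signature_le hub) _).trans_lt
    (toLex_domRestrict_Iic_update_lt hb)

theorem mem_subList_of_depX (hpq : depX M Φ (SignatureDep M Φ) X p q)
    (hp : p.2 ∈ (fxOf Φ X).subList) : q.2 ∈ (fxOf Φ X).subList := by
  rcases hpq.1.move.var_or_subformula with ⟨Y, hY, rfl⟩ | ⟨hq, -⟩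
  · exact hpq.2 Y hY
  · exact subList_trans hq hp

theorem ne_fxOf_of_ne_var (hc : Φ.Closed) (hwn : WellNamed Φ) (hX : X ∈ Φ.boundVars)
    (hpq : SignatureDep M Φ p q) (hp : p.2 ∈ (fxOf Φ X).subList) (hpX : p.2 ≠ var X) :
    q.2 ≠ fxOf Φ X := by
  intro hq
  rcases hpq.move.var_or_subformula with ⟨Y, hY, rfl⟩ | ⟨-, hlt⟩
  · have hYb : Y ∈ Φ.boundVars := (mem_boundVars_and_mem_subList_body_fxOf hc hwn
      (hY ▸ hpq.mem_subList) (Set.mem_singleton Y)).1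
    exact hpX (hY.trans (congrArg var
      (bindsVar_unique (bindsVar_fxOf hYb) ((show fxOf Φ Y = _ from hq) ▸ bindsVar_fxOf hX))))
  · exact (sizeOf_le_of_mem_subList hp).not_gt (hq ▸ hlt)

theorem lfpFinite_signatureDep (hc : Φ.Closed) (hwn : WellNamed Φ) :
    LfpFinite M Φ (SignatureDep M Φ) := by
  intro X hX f hf
  have hXb := mem_boundVars_of_isLfpVar hX
  rcases Set.eq_empty_or_nonempty {n | (f n).2 = var X} with hempty | ⟨N, hN⟩
  · exact hempty ▸ Set.finite_empty
  have stays : ∀ n, N ≤ n → (f n).2 ∈ (fxOf Φ X).subList := by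
    refine Nat.le_induction ?_ fun n _ hn => mem_subList_of_depX (hf n) hn
    exact subList_trans (mem_boundVars_and_mem_subList_body_fxOf hc hwn (hf N).1.mem_subList
      (by rw [hN]; rfl)).2 (body_mem_subList _)
  have strict : ∀ n, (f n).2 = var X →
      signatureUpTo M Φ X (f (n + 1)) < signatureUpTo M Φ X (f n) := fun n =>
    signatureUpTo_lt_of_eq_var hc hwn hX (hf n).1
  have antitone : ∀ n, N ≤ n →
      signatureUpTo M Φ X (f (n + 1)) ≤ signatureUpTo M Φ X (f n) := fun n hn => by
    by_cases hnX : (f n).2 = var X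
    · exact (strict n hnX).le
    · exact signatureUpTo_le_of_mem_subList hc hwn hXb (hf n).1 (stays _ (Nat.le_succ_of_le hn))
        (ne_fxOf_of_ne_var hc hwn hXb (hf n).1 (stays n hn) hnX)
  have hfin := finite_setOf_succ_lt (m := signatureUpTo M Φ X ∘ f) antitone
  refine ((Set.finite_Iio N).union hfin).subset fun n hn => ?_
  rcases lt_or_ge n N with h | h
  exacts [.inl h, .inr ⟨h, strict n hn⟩]

end Dependency

end Formula

theorem exists_lfp_finite_dependency_relation_general [DecidableEq LVar]
    (M : KModel Ag PVar) (φ : Formula Ag PVar LVar) (hc : φ.Closed) (hwn : WellNamed φ)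
    (ρ : LVar → Set M.W)
    (hρ : ∀ (X : LVar) (ψ : Formula Ag PVar LVar),
      findFx X φ = some ψ → ρ X = Formula.sem M ψ ρ) :
    ∃ D : M.W × Formula Ag PVar LVar → M.W × Formula Ag PVar LVar → Prop,
      IsDepRel M φ ρ D ∧ LfpFinite M φ D :=
  ⟨Formula.SignatureDep M φ,
    Formula.isDepRel_signatureDep hc hwn fun X hX => hρ X _ (Formula.findFx_eq_some_fxOf hX),
    Formula.lfpFinite_signatureDep hc hwn⟩

/-- if (M,w) ⊨ φ for an L-model M and a closed, well-named φ,
then there exists an lfp-finite dependency relation on M and φ. -/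
theorem exists_lfp_finite_dependency_relation [DecidableEq LVar]
    (L : Ag → Set FrameCond) (M : KModel Ag PVar) (hM : IsLModel L M)
    (w : M.W) (φ : Formula Ag PVar LVar) (hc : φ.Closed) (hwn : WellNamed φ)
    (ρ : LVar → Set M.W)
    (hρ : ∀ (X : LVar) (ψ : Formula Ag PVar LVar),
      findFx X φ = some ψ → ρ X = Formula.sem M ψ ρ)
    (hw : w ∈ Formula.sem M φ ρ) :
    ∃ D : M.W × Formula Ag PVar LVar → M.W × Formula Ag PVar LVar → Prop,
      IsDepRel M φ ρ D ∧ LfpFinite M φ D :=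
  exists_lfp_finite_dependency_relation_general M φ hc hwn ρ hρ
end

section
/- If L is a logic all of whose frame conditions are among D, T, 4 (i.e., for every agent α, L(α) ⊆ {D,T,4}), then there is a computable function κ : ℕ → ℕ such that every L-satisfiable closed formula φ is satisfied at some state of an L-model with at most κ(|φ|) states, where |φ| is the number of distinct subformulas of φ. -/
variable {Ag PVar LVar : Type}

/-- |φ|: the number of distinct subformulas of φ. -/
def fsize [DecidableEq Ag] [DecidableEq PVar] [DecidableEq LVar]
    (φ : Formula Ag PVar LVar) : ℕ :=
  φ.subList.toFinset.card

/-!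
A formula is unfolded into a flow chart. It holds at a state if and only if the state can be marked
with the entry of the chart so that marks are passed on correctly and each least fixed point has an
ordinal rank which decreases whenever its entry is revisited. Boxes unfold the conditions `T` and
`4`, so that it is enough to find a finite serial model with such a marking and to close its
relations at the end.

A marked model is folded onto finitely many memories, consisting of a set of marks, the order of the
ranks and an age order of the rank positions. Each memory is represented by a state whose ranks,
read by age, are lexicographically least. The representative of a child may have larger ranks than
the child itself, yet no cycle of the folded model passes through a decrease of rank: let `l` be the
oldest position reordered on the cycle. By minimality the ranks at positions before `l` are constant
along the cycle, and because of the decrease the rank that is followed stays strictly between the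
same two of them. The oldest later position which bounds it there never becomes younger, but it
becomes older whenever `l` is reordered. Hence natural numbers suffice as ranks in the folded model.
-/

/-! ### Reordering by age -/

section Reordering

variable {k : ℕ}

theorem apply_add_sub_le_apply {f : Fin k → ℕ} (hf : Monotone f)
    (hinj : ∀ x y, f x = f y → f x < k → x = y) {x y : Fin k} (hxy : x ≤ y) (hy : f y < k) :
    f x + (y - x : ℕ) ≤ f y := by
  obtain ⟨n, hn⟩ := y
  induction n with
  | zero => simpa using hf hxy
  | succ n ih =>
    rcases hxy.eq_or_lt with rfl | hlt
    · simp
    have hle : f ⟨n, by omega⟩ ≤ f ⟨n + 1, hn⟩ := hf (by simp)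
    have hne : f ⟨n, by omega⟩ ≠ f ⟨n + 1, hn⟩ := fun h ↦ by
      simpa using congrArg Fin.val (hinj _ _ h (h ▸ hy))
    have := ih (by omega) (Nat.le_of_lt_succ hlt) (by omega)
    simp only at this ⊢
    have : (x : ℕ) < n + 1 := hlt
    omega

variable {Q O : Type*} [LinearOrder O]

/-- The element `q` is the last one, by `r` and then by age in `g`, below the bound `c`. -/
def IsLastBelow (g : Fin k ≃ Q) (r : Q → O) (c : O) (q : Q) : Prop :=
  r q ≤ c ∧ ∀ q', r q' ≤ c → toLex (r q', g.symm q') ≤ toLex (r q, g.symm q)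

theorem IsLastBelow.eq {g : Fin k ≃ Q} {r : Q → O} {c : O} {q q' : Q}
    (h : IsLastBelow g r c q) (h' : IsLastBelow g r c q') : q = q' := by
  have := le_antisymm (h'.2 q h.1) (h.2 q' h'.1)
  simpa using congrArg (fun z ↦ (ofLex z).2) this

theorem exists_isLastBelow (g : Fin k ≃ Q) (r : Q → O) {c : O} {q : Q} (hq : r q ≤ c) :
    ∃ q', IsLastBelow g r c q' ∧ r q ≤ r q' := by
  have : Finite Q := .of_equiv _ g
  obtain ⟨q', hq', hmax⟩ :=
    Set.exists_max_image {q | r q ≤ c} (fun q ↦ toLex (r q, g.symm q)) (Set.toFinite _) ⟨q, hq⟩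
  refine ⟨q', ⟨hq', hmax⟩, ?_⟩
  rcases Prod.Lex.le_iff.1 (hmax q hq) with h | h
  · exact h.le
  · exact h.1.le

/-- The oldest threshold of `b` below which `q` is last, or `k` if there is none. -/
noncomputable def servedSlot (g : Fin k ≃ Q) (b : Fin k → O) (r : Q → O) (q : Q) : ℕ :=
  sInf ({j | ∃ h : j < k, IsLastBelow g r (b ⟨j, h⟩) q} ∪ {k})

section
variable {g : Fin k ≃ Q} {b : Fin k → O} {r : Q → O} {q q' : Q}

theorem isLastBelow_servedSlot (h : servedSlot g b r q < k) :
    IsLastBelow g r (b ⟨servedSlot g b r q, h⟩) q := by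
  rcases Nat.sInf_mem (s := {j | ∃ h : j < k, IsLastBelow g r (b ⟨j, h⟩) q} ∪ {k})
    ⟨k, .inr rfl⟩ with ⟨_, h'⟩ | h'
  · exact h'
  · exact absurd h' h.ne

theorem servedSlot_le {i : Fin k} (h : IsLastBelow g r (b i) q) : servedSlot g b r q ≤ i :=
  Nat.sInf_le (.inl ⟨i.2, h⟩)

theorem eq_of_servedSlot_eq (h : servedSlot g b r q = servedSlot g b r q')
    (hk : servedSlot g b r q < k) : q = q' := by
  have hq' := isLastBelow_servedSlot (h ▸ hk)
  simp only [← h] at hq'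
  exact (isLastBelow_servedSlot hk).eq hq'

end

/-- Sorting by `servedSlot` lets the elements that serve old thresholds become old themselves. -/
theorem exists_reordering (g : Fin k ≃ Q) (b : Fin k → O) (r : Q → O) :
    ∃ (g' : Fin k ≃ Q) (e : ℕ), (∀ j : Fin k, j < e → r (g' j) ≤ b j) ∧
      ∀ q i, r q ≤ b i →
        ∃ i' ≤ i, r q ≤ r (g' i') ∧ r (g' i') ≤ b i ∧ (e ≤ i → i' < i) := by
  set τ := servedSlot g b r
  set g' := (Tuple.sort (τ ∘ g)).trans g
  have hmono : Monotone (τ ∘ g') := Tuple.monotone_sort (τ ∘ g)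
  have hcount {x y : Fin k} : x ≤ y → τ (g' y) < k → τ (g' x) + (y - x : ℕ) ≤ τ (g' y) :=
    apply_add_sub_le_apply hmono fun _ _ h hk ↦ g'.injective (eq_of_servedSlot_eq h hk)
  have hself (x : Fin k) : x ≤ τ (g' x) := by
    by_contra! h
    have : τ (g' ⟨0, x.pos⟩) + (x - 0 : ℕ) ≤ τ (g' x) := hcount (Nat.zero_le _) (by omega)
    omega
  set moved := {x | ∃ h : x < k, τ (g' ⟨x, h⟩) ≠ x} ∪ {k}
  refine ⟨g', sInf moved, fun j hj ↦ ?_, fun q i hqi ↦ ?_⟩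
  · have hfix : τ (g' j) = j := by
      by_contra h
      exact Nat.notMem_of_lt_sInf hj (.inl ⟨j.2, h⟩)
    have hlast := isLastBelow_servedSlot (g := g) (b := b) (r := r) (hfix.trans_lt j.2)
    exact hlast.1.trans_eq (congrArg b (Fin.ext hfix))
  · obtain ⟨q', hq', hle⟩ := exists_isLastBelow g r hqi
    have hτ : τ (g' (g'.symm q')) ≤ i := by simpa using servedSlot_le hq'
    have hi' := (hself (g'.symm q')).trans hτ
    refine ⟨g'.symm q', hi', by simpa using hle, by simpa using hq'.1, fun hei ↦ ?_⟩
    by_contra! hii'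
    rw [show g'.symm q' = i from le_antisymm hi' hii'] at hτ
    obtain ⟨hk, hne⟩ | hk := Nat.sInf_mem (s := moved) ⟨k, .inr rfl⟩
    · have := hself ⟨_, hk⟩
      have := hcount (x := ⟨sInf moved, hk⟩) hei (by omega)
      simp only at *
      omega
    · have := Set.mem_singleton_iff.1 hk
      omega

end Reordering

/-! ### Ranked cycles -/

section Component

variable {X P : Type*} [PartialOrder P] {E : X → X → Prop} {f : X → P} {a x : X}

open Relation in
theorem eq_of_antisymmRel_reflTransGen
    (hf : ∀ x y, AntisymmRel (ReflTransGen E) a x → AntisymmRel (ReflTransGen E) a y →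
      E x y → f y ≤ f x)
    (h : AntisymmRel (ReflTransGen E) a x) : f x = f a := by
  have antitone {x y} (hxy : ReflTransGen E x y) :
      ReflTransGen E a x → ReflTransGen E y a → f y ≤ f x := by
    intro hx hy
    induction hxy using ReflTransGen.head_induction_on with
    | refl => rfl
    | @head x z hxz hzy ih =>
      exact (ih (hx.tail hxz)).trans
        (hf x z ⟨hx, .head hxz (hzy.trans hy)⟩ ⟨hx.tail hxz, hzy.trans hy⟩ hxz)
  exact (antitone h.1 .refl h.2).antisymm (antitone h.2 h.1 .refl)

end Component

section AgeStep

variable {S Q O : Type*} [LinearOrder O] {k : ℕ}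

/-- A transition of a memory holding ranks `ρ` and an age order `g`, seen through the intermediate
ranks `r`: the ranks `ρ s'` order `Q` as `r` does and are lexicographically at most `r`, while
`e` is a position before which no threshold increases and from which on each element is pushed
to an older threshold. -/
structure AgeStep (ρ : S → Q → O) (g : S → Fin k ≃ Q) (s s' : S) (e : ℕ) (r : Q → O) : Prop where
  rank_le_rank_iff : ∀ q q', ρ s' q ≤ ρ s' q' ↔ r q ≤ r q'
  lex_le : toLex (fun j ↦ ρ s' (g s' j)) ≤ toLex fun j ↦ r (g s' j)
  le_threshold : ∀ j : Fin k, j < e → r (g s' j) ≤ ρ s (g s j)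
  exists_older : ∀ q i, r q ≤ ρ s (g s i) →
    ∃ i' ≤ i, r q ≤ r (g s' i') ∧ r (g s' i') ≤ ρ s (g s i) ∧ (e ≤ i → i' < i)

variable {ρ : S → Q → O} {g : S → Fin k ≃ Q}

theorem AgeStep.rank_lt_rank_iff {s s' : S} {e : ℕ} {r : Q → O} (h : AgeStep ρ g s s' e r)
    (q q' : Q) : ρ s' q < ρ s' q' ↔ r q < r q' := by
  simp only [← not_le, h.rank_le_rank_iff]

theorem AgeStep.stay (s : S) : AgeStep ρ g s s k (ρ s) where
  rank_le_rank_iff _ _ := .rfl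
  lex_le := le_rfl
  le_threshold _ _ := le_rfl
  exists_older _ i h := ⟨i, le_rfl, h, le_rfl, fun hk ↦ absurd i.2 hk.not_gt⟩

variable (ρ g) in
/-- An edge between ranked elements which does not increase the rank. -/
def WeakEdge (x y : S × Q) : Prop := ∃ e r, AgeStep ρ g x.1 y.1 e r ∧ r y.2 ≤ ρ x.1 x.2

variable (ρ g) in
/-- An edge between ranked elements which decreases the rank. -/
def StrictEdge (x y : S × Q) : Prop := ∃ e r, AgeStep ρ g x.1 y.1 e r ∧ r y.2 < ρ x.1 x.2

theorem StrictEdge.weakEdge {x y : S × Q} : StrictEdge ρ g x y → WeakEdge ρ g x y :=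
  fun ⟨e, r, h, hr⟩ ↦ ⟨e, r, h, hr.le⟩

variable (ρ g) in
/-- Mutual reachability along weak edges. -/
abbrev SameCycle : S × Q → S × Q → Prop := AntisymmRel (Relation.ReflTransGen (WeakEdge ρ g))

variable (ρ g) in
/-- The data of an edge of the strong component of `a`. -/
structure CycleEdge (a x y : S × Q) (e : ℕ) (r : Q → O) : Prop where
  left_mem : SameCycle ρ g a x
  right_mem : SameCycle ρ g a y
  step : AgeStep ρ g x.1 y.1 e r
  le : r y.2 ≤ ρ x.1 x.2

theorem CycleEdge.eq_of_antitone {P : Type*} [PartialOrder P] {a x : S × Q} {f : S × Q → P}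
    (hf : ∀ x y e r, CycleEdge ρ g a x y e r → f y ≤ f x) (h : SameCycle ρ g a x) : f x = f a :=
  eq_of_antisymmRel_reflTransGen
    (fun x y hx hy ⟨e, r, hstep, hr⟩ ↦ hf x y e r ⟨hx, hy, hstep, hr⟩) h

section Cycle

variable {a : S × Q} {l : ℕ} (hl : ∀ x y e r, CycleEdge ρ g a x y e r → l ≤ e)
include hl

theorem CycleEdge.threshold_eq (j : Fin k) (hj : j < l) :
    ∀ {x y e r}, CycleEdge ρ g a x y e r →
      ρ y.1 (g y.1 j) = r (g y.1 j) ∧ r (g y.1 j) = ρ x.1 (g x.1 j) := by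
  induction j using WellFoundedLT.induction with
  | ind j ih =>
    have le_mid {x y e r} (h : CycleEdge ρ g a x y e r) : ρ y.1 (g y.1 j) ≤ r (g y.1 j) :=
      Pi.apply_le_of_toLex (x := fun j ↦ ρ y.1 (g y.1 j)) (y := fun j ↦ r (g y.1 j))
        h.step.lex_le fun i hi ↦ (ih i hi (lt_trans hi hj) h).1
    have mid_le {x y e r} (h : CycleEdge ρ g a x y e r) : r (g y.1 j) ≤ ρ x.1 (g x.1 j) :=
      h.step.le_threshold j (hj.trans_le (hl _ _ _ _ h))
    have const {x} (h : SameCycle ρ g a x) : ρ x.1 (g x.1 j) = ρ a.1 (g a.1 j) :=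
      eq_of_antitone (f := fun x ↦ ρ x.1 (g x.1 j))
        (fun _ _ _ _ h ↦ (le_mid h).trans (mid_le h)) h
    intro x y e r h
    have heq := (const h.left_mem).trans (const h.right_mem).symm
    exact ⟨(le_mid h).antisymm ((mid_le h).trans_eq heq),
      (mid_le h).antisymm (heq.trans_le (le_mid h))⟩

theorem CycleEdge.rank_le_threshold_iff {x y : S × Q} {e : ℕ} {r : Q → O}
    (h : CycleEdge ρ g a x y e r) {j : Fin k} (hj : j < l) (q : Q) :
    ρ y.1 q ≤ ρ y.1 (g y.1 j) ↔ r q ≤ ρ x.1 (g x.1 j) := by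
  rw [h.step.rank_le_rank_iff, (h.threshold_eq hl j hj).2]

theorem CycleEdge.threshold_le_rank_iff {x y : S × Q} {e : ℕ} {r : Q → O}
    (h : CycleEdge ρ g a x y e r) {j : Fin k} (hj : j < l) (q : Q) :
    ρ y.1 (g y.1 j) ≤ ρ y.1 q ↔ ρ x.1 (g x.1 j) ≤ r q := by
  rw [h.step.rank_le_rank_iff, (h.threshold_eq hl j hj).2]

theorem SameCycle.threshold_lt_iff {x : S × Q} (h : SameCycle ρ g a x) {j : Fin k} (hj : j < l) :
    ρ x.1 (g x.1 j) < ρ x.1 x.2 ↔ ρ a.1 (g a.1 j) < ρ a.1 a.2 := by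
  refine iff_of_eq (CycleEdge.eq_of_antitone (f := fun x ↦ ρ x.1 (g x.1 j) < ρ x.1 x.2)
    (fun x y e r hxy hlt ↦ ?_) h)
  contrapose! hlt
  exact (hxy.rank_le_threshold_iff hl hj _).2 (hxy.le.trans hlt)

theorem SameCycle.threshold_le_iff {x : S × Q} (h : SameCycle ρ g a x) {j : Fin k} (hj : j < l) :
    ρ x.1 (g x.1 j) ≤ ρ x.1 x.2 ↔ ρ a.1 (g a.1 j) ≤ ρ a.1 a.2 :=
  iff_of_eq (CycleEdge.eq_of_antitone (f := fun x ↦ ρ x.1 (g x.1 j) ≤ ρ x.1 x.2)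
    (fun _ _ _ _ hxy hle ↦ ((hxy.threshold_le_rank_iff hl hj _).1 hle).trans hxy.le) h)

variable (hstrict : ∃ x y e r, CycleEdge ρ g a x y e r ∧ r y.2 < ρ x.1 x.2)
include hstrict

theorem SameCycle.threshold_ne {x : S × Q} (h : SameCycle ρ g a x) {j : Fin k} (hj : j < l) :
    ρ x.1 (g x.1 j) ≠ ρ x.1 x.2 := by
  obtain ⟨y, z, e, r, hyz, hlt⟩ := hstrict
  refine fun heq ↦ heq.not_lt <| (h.threshold_lt_iff hl hj).2 <|
    (hyz.left_mem.threshold_lt_iff hl hj).1 ?_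
  have hle := (hyz.right_mem.threshold_le_iff hl hj).2 ((h.threshold_le_iff hl hj).1 heq.le)
  exact ((hyz.threshold_le_rank_iff hl hj _).1 hle).trans_lt hlt

theorem SameCycle.rank_lt_threshold_iff {x : S × Q} (h : SameCycle ρ g a x) {j : Fin k}
    (hj : j < l) : ρ x.1 x.2 < ρ x.1 (g x.1 j) ↔ ρ a.1 a.2 < ρ a.1 (g a.1 j) := by
  have ha : SameCycle ρ g a a := AntisymmRel.refl _ a
  rw [← (h.threshold_ne hl hstrict hj).symm.le_iff_lt,
    ← (ha.threshold_ne hl hstrict hj).symm.le_iff_lt, ← not_lt, ← not_lt,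
    h.threshold_lt_iff hl hj]

omit hl hstrict in
variable (ρ g l) in
/-- The positions from `l` on whose thresholds bound the rank of `x` and are separated from it by
none of the thresholds before `l`. -/
def boundingSlots (x : S × Q) : Set (Fin k) :=
  {i | l ≤ i ∧ ρ x.1 x.2 ≤ ρ x.1 (g x.1 i) ∧
    ∀ j : Fin k, j < l → ρ x.1 x.2 < ρ x.1 (g x.1 j) → ρ x.1 (g x.1 i) < ρ x.1 (g x.1 j)}

theorem SameCycle.nonempty_boundingSlots {x : S × Q} (h : SameCycle ρ g a x) :
    (boundingSlots ρ g l x).Nonempty := by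
  refine ⟨(g x.1).symm x.2, ?_, by simp, by simp⟩
  by_contra! hlt
  simpa using h.threshold_ne hl hstrict hlt

theorem CycleEdge.exists_mem_boundingSlots {x y : S × Q} {e : ℕ} {r : Q → O}
    (h : CycleEdge ρ g a x y e r) {i : Fin k} (hi : i ∈ boundingSlots ρ g l x) :
    ∃ i' ∈ boundingSlots ρ g l y, i' ≤ i ∧ (e ≤ i → i' < i) := by
  obtain ⟨i', hle, hy, hx, hlt⟩ := h.step.exists_older y.2 i (h.le.trans hi.2.1)
  have rank_lt_iff {j : Fin k} (hj : j < l) :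
      ρ y.1 y.2 < ρ y.1 (g y.1 j) ↔ ρ x.1 x.2 < ρ x.1 (g x.1 j) :=
    (h.right_mem.rank_lt_threshold_iff hl hstrict hj).trans
      (h.left_mem.rank_lt_threshold_iff hl hstrict hj).symm
  have hy' : ρ y.1 y.2 ≤ ρ y.1 (g y.1 i') := (h.step.rank_le_rank_iff _ _).2 hy
  refine ⟨i', ⟨?_, hy', fun j hj hyj ↦ ?_⟩, hle, hlt⟩
  · by_contra! hi'
    have hne := (h.right_mem.threshold_ne hl hstrict hi').symm
    have := hi.2.2 i' hi' ((rank_lt_iff hi').1 (hy'.lt_of_ne hne))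
    rw [(h.threshold_eq hl i' hi').2] at hx
    exact hx.not_gt this
  · rw [h.step.rank_lt_rank_iff, (h.threshold_eq hl j hj).2]
    exact hx.trans_lt (hi.2.2 j hj ((rank_lt_iff hj).1 hyj))

theorem CycleEdge.lt_of_strict {x y : S × Q} {e : ℕ} {r : Q → O}
    (h : CycleEdge ρ g a x y e r) : l < e := by
  -- The oldest bounding position never becomes younger along the component, and becomes strictly
  -- older along an edge which reorders at `l`.
  let oldest (x : S × Q) : ℕ := sInf (Fin.val '' boundingSlots ρ g l x)
  have oldest_anti {x y e r} (h : CycleEdge ρ g a x y e r) :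
      oldest y ≤ oldest x ∧ (e ≤ l → oldest y < oldest x) := by
    obtain ⟨i, hi, hix⟩ : oldest x ∈ Fin.val '' boundingSlots ρ g l x :=
      Nat.sInf_mem ((h.left_mem.nonempty_boundingSlots hl hstrict).image _)
    obtain ⟨i', hi', hle, hlt⟩ := h.exists_mem_boundingSlots hl hstrict hi
    have hy : oldest y ≤ i' := Nat.sInf_le ⟨i', hi', rfl⟩
    rw [← hix]
    exact ⟨hy.trans hle, fun hel ↦ hy.trans_lt (hlt (hel.trans hi.1))⟩
  have const {x} (h : SameCycle ρ g a x) : oldest x = oldest a :=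
    eq_of_antitone (fun _ _ _ _ h ↦ (oldest_anti h).1) h
  refine (hl _ _ _ _ h).lt_of_ne fun heq ↦ ?_
  exact ((oldest_anti h).2 heq.ge).ne ((const h.right_mem).trans (const h.left_mem).symm)

end Cycle

theorem StrictEdge.not_reflTransGen {x y : S × Q} (h : StrictEdge ρ g x y) :
    ¬ Relation.ReflTransGen (WeakEdge ρ g) y x := by
  intro hyx
  obtain ⟨e, r, hstep, hlt⟩ := id h
  have hxy : CycleEdge ρ g x x y e r :=
    ⟨AntisymmRel.refl _ x, ⟨.single h.weakEdge, hyx⟩, hstep, hlt.le⟩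
  let positions := {e | ∃ y z r, CycleEdge ρ g x y z e r}
  obtain ⟨y', z', r', hmin⟩ : sInf positions ∈ positions := Nat.sInf_mem ⟨e, x, y, r, hxy⟩
  exact (hmin.lt_of_strict (fun y z e r he ↦ Nat.sInf_le (show e ∈ positions from ⟨y, z, r, he⟩))
    ⟨x, y, e, r, hxy, hlt⟩).false

end AgeStep

section StratifiedRank

open Relation

variable {X : Type*} [Finite X] {weak strict : X → X → Prop}

theorem exists_rank_of_acyclic (hsub : ∀ x y, strict x y → weak x y)
    (hacyclic : ∀ x y, strict x y → ¬ ReflTransGen weak y x) :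
    ∃ rank : X → ℕ, (∀ x y, weak x y → rank y ≤ rank x) ∧
      ∀ x y, strict x y → rank y < rank x := by
  let below (x : X) : Set X :=
    {z | ∃ u v, ReflTransGen weak x u ∧ strict u v ∧ ReflTransGen weak v z}
  have anti {x y} (h : weak x y) : below y ⊆ below x :=
    fun z ⟨u, v, hyu, huv, hvz⟩ ↦ ⟨u, v, .head h hyu, huv, hvz⟩
  refine ⟨fun x ↦ (below x).ncard, fun x y h ↦ Set.ncard_le_ncard (anti h) (Set.toFinite _),
    fun x y h ↦ ?_⟩
  have hmem : y ∈ below x := ⟨x, y, .refl, h, .refl⟩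
  refine Set.ncard_lt_ncard ⟨anti (hsub x y h), fun hle ↦ ?_⟩ (Set.toFinite _)
  obtain ⟨u, v, hyu, huv, hvy⟩ := hle hmem
  exact hacyclic u v huv (hvy.trans hyu)

end StratifiedRank

/-! ### Folding a ranked graph -/

section Folding

universe v

variable {N Δ O : Type*} {Λ Q : Type v} [LinearOrder O]

/-- A quotient of the graph with labels `lab` and edges `child`, given by a representative `node`
for each of its states. The representatives of the children of a state only have the same label
as the children of its representative, yet `rank` decreases where the ranks `r` do, both within a
node and along edges. -/
structure Folding (lab : N → Λ) (child : N → Δ → N) (r : N → Q → O) where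
  State : Type v
  node : State → N
  move : State → Δ → State
  rank : State → Q → ℕ
  exists_node : ∀ n, ∃ s, lab (node s) = lab n
  lab_move : ∀ s d, lab (node (move s d)) = lab (child (node s) d)
  rank_le : ∀ s q q', r (node s) q' ≤ r (node s) q → rank s q' ≤ rank s q
  rank_lt : ∀ s q q', r (node s) q' < r (node s) q → rank s q' < rank s q
  rank_move_le : ∀ s d q q',
    r (child (node s) d) q' ≤ r (node s) q → rank (move s d) q' ≤ rank s q
  rank_move_lt : ∀ s d q q',
    r (child (node s) d) q' < r (node s) q → rank (move s d) q' < rank s q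

variable (lab : N → Λ) (child : N → Δ → N) (r : N → Q → O)

/-- The label of a node together with the order in which its ranks put `Q`. -/
def profile (n : N) : Λ × (Q → Q → Prop) := (lab n, fun q q' ↦ r n q ≤ r n q')

/-- The states of the folding: a profile and an age order on `Q`. -/
abbrev Memory (k : ℕ) : Type _ := Set.range (profile lab r) × (Fin k ≃ Q)

variable {k : ℕ}

theorem exists_lexMin_of_profile [WellFoundedLT O] (s : Memory lab r k) :
    ∃ n, profile lab r n = s.1 ∧
      ∀ n', profile lab r n' = s.1 → toLex (r n ∘ s.2) ≤ toLex (r n' ∘ s.2) := by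
  have hne : {n | profile lab r n = s.1}.Nonempty := s.1.2
  let f (n : N) : Lex (Fin k → O) := toLex (r n ∘ s.2)
  exact ⟨Function.argminOn f _ hne, Function.argminOn_mem f _ hne,
    fun n' hn' ↦ Function.argminOn_le f _ hn'⟩

theorem card_memory_le [Finite Λ] [Finite Q] (hk : Nat.card Q = k) :
    Nat.card (Memory lab r k) ≤ Nat.card Λ * 2 ^ (k * k) * 2 ^ (k * k) := by
  classical
  have := Fintype.ofFinite Q
  have hrange : Nat.card (Set.range (profile lab r)) ≤ Nat.card Λ * 2 ^ (k * k) := by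
    refine (Nat.card_le_card_of_injective _ Subtype.val_injective).trans_eq ?_
    subst hk
    simp [Nat.card_prod, pow_mul]
  have horder : Nat.card (Fin k ≃ Q) ≤ 2 ^ (k * k) := by
    rw [Nat.card_eq_fintype_card, Fintype.card_equiv (Finite.equivFinOfCardEq hk).symm,
      Fintype.card_fin, pow_mul]
    exact (Nat.factorial_le_pow k).trans (Nat.pow_le_pow_left Nat.lt_two_pow_self.le k)
  rw [Nat.card_prod]
  exact Nat.mul_le_mul hrange horder

theorem exists_folding [WellFoundedLT O] [Finite Λ] [Finite Q] (hk : Nat.card Q = k) :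
    ∃ F : Folding lab child r, Finite F.State ∧
      Nat.card F.State ≤ Nat.card Λ * 2 ^ (k * k) * 2 ^ (k * k) := by
  choose node profile_node node_min using exists_lexMin_of_profile (k := k) lab r
  choose order e le_threshold exists_older using fun (s : Memory lab r k) d ↦
    exists_reordering s.2 (fun j ↦ r (node s) (s.2 j))
      (r (child (node s) d))
  let move (s : Memory lab r k) (d : Δ) : Memory lab r k :=
    (⟨profile lab r (child (node s) d), _, rfl⟩, order s d)
  let ρ (s : Memory lab r k) := r (node s)
  let g (s : Memory lab r k) := s.2
  have step (s : Memory lab r k) (d : Δ) :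
      AgeStep ρ g s (move s d) (e s d) (r (child (node s) d)) :=
    { rank_le_rank_iff q q' :=
        iff_of_eq (congrFun₂ (congrArg Prod.snd (profile_node (move s d))) q q')
      lex_le := node_min (move s d) _ rfl
      le_threshold := le_threshold s d
      exists_older := exists_older s d }
  obtain ⟨rank, rank_le, rank_lt⟩ := exists_rank_of_acyclic
    (fun _ _ ↦ StrictEdge.weakEdge (ρ := ρ) (g := g)) fun _ _ ↦ StrictEdge.not_reflTransGen
  let F : Folding lab child r :=
    { State := _, node, move
      rank s q := rank (s, q)
      exists_node n :=
        ⟨(⟨profile lab r n, n, rfl⟩, (Finite.equivFinOfCardEq hk).symm),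
          congrArg Prod.fst (profile_node _)⟩
      lab_move s d := congrArg Prod.fst (profile_node (move s d))
      rank_le s q q' h := rank_le (s, q) (s, q') ⟨k, _, .stay s, h⟩
      rank_lt s q q' h := rank_lt (s, q) (s, q') ⟨k, _, .stay s, h⟩
      rank_move_le s d q q' h := rank_le (s, q) (move s d, q') ⟨_, _, step s d, h⟩
      rank_move_lt s d q q' h := rank_lt (s, q) (move s d, q') ⟨_, _, step s d, h⟩ }
  exact ⟨F, inferInstanceAs (Finite (Memory lab r k)),
    card_memory_le lab r hk⟩

end Folding

/-! ### Programs and markings -/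

section Programs

/-- The instruction at a position of a program, with jumps to positions in `P`. Free recursion
variables are left through `exit`, and `goto` enters or repeats a fixed point. -/
inductive Instr (Ag PVar LVar P : Type) : Type
  | test (A : Set PVar → Prop)
  | exit (X : LVar)
  | goto (p : P)
  | and (p q : P)
  | or (p q : P)
  | dia (i : Ag) (p : P)
  | box (i : Ag) (p : P)

variable {P P' : Type}

/-- The instruction with its jumps redirected along `f` and `exit X` replaced by `h X`; it expresses
the composition of programs. -/
def Instr.subst (f : P → P') (h : LVar → Instr Ag PVar LVar P') :
    Instr Ag PVar LVar P → Instr Ag PVar LVar P'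
  | test A => test A
  | exit X => h X
  | goto p => goto (f p)
  | and p q => and (f p) (f q)
  | or p q => or (f p) (f q)
  | dia i p => dia i (f p)
  | box i p => box i (f p)

/-- The instruction with its jumps redirected along `f`. -/
def Instr.map (f : P → P') : Instr Ag PVar LVar P → Instr Ag PVar LVar P' := subst f exit

/-- The local condition which an instruction imposes at the state `w`, when `next v q` says that
one may continue at `v` with position `q`, and `stay v` that one may continue at `v` with the
position of the instruction itself. In a box, the conditions `T` and `4` of `L` are unfolded, so
that they need not hold in `M`. -/
def Instr.Holds (L : Ag → Set FrameCond) (M : KModel Ag PVar) (ρ : LVar → Set M.W)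
    (stay : M.W → Prop) (next : M.W → P → Prop) (w : M.W) : Instr Ag PVar LVar P → Prop
  | test A => A (M.V w)
  | exit X => w ∈ ρ X
  | goto p => next w p
  | and p q => next w p ∧ next w q
  | or p q => next w p ∨ next w q
  | dia i p => ∃ v, M.R i w v ∧ next v p
  | box i p => (∀ v, M.R i w v → next v p ∧ (.four ∈ L i → stay v)) ∧ (.T ∈ L i → next w p)

variable {L : Ag → Set FrameCond} {M : KModel Ag PVar} {ρ ρ' : LVar → Set M.W}
  {stay stay' : M.W → Prop} {next next' : M.W → P → Prop} {w : M.W} {I : Instr Ag PVar LVar P}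

theorem Instr.Holds.mono (h : I.Holds L M ρ stay next w) (hρ : ∀ X, w ∈ ρ X → w ∈ ρ' X)
    (hstay : ∀ v, stay v → stay' v) (hnext : ∀ v q, next v q → next' v q) :
    I.Holds L M ρ' stay' next' w := by
  cases I with
  | test A => exact h
  | exit X => exact hρ X h
  | goto p => exact hnext w p h
  | and p q => exact h.imp (hnext w p) (hnext w q)
  | or p q => exact Or.imp (hnext w p) (hnext w q) h
  | dia i p => exact h.imp fun v ↦ And.imp_right (hnext v p)
  | box i p =>
    exact ⟨fun v hv ↦ (h.1 v hv).imp (hnext v p) (hstay v ∘ ·), fun hT ↦ hnext w p (h.2 hT)⟩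

theorem Instr.holds_subst {f : P → P'} {h : LVar → Instr Ag PVar LVar P'}
    {next : M.W → P' → Prop} :
    (I.subst f h).Holds L M ρ stay next w ↔
      I.Holds L M (fun X ↦ {u | (h X).Holds L M ρ stay next u}) stay
        (fun v q ↦ next v (f q)) w := by
  cases I <;> rfl

theorem Instr.holds_map {f : P → P'} {next : M.W → P' → Prop} :
    (I.map f).Holds L M ρ stay next w ↔ I.Holds L M ρ stay (fun v q ↦ next v (f q)) w :=
  holds_subst

theorem Instr.holds_subst_update [DecidableEq LVar] {f : P → P'} {X : LVar} {p : P'}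
    {next : M.W → P' → Prop} :
    (I.subst f (Function.update exit X (goto p))).Holds L M ρ stay next w ↔
      I.Holds L M (Function.update ρ X {u | next u p}) stay (fun v q ↦ next v (f q)) w := by
  rw [holds_subst]
  congr! 1
  funext Y
  by_cases hY : Y = X
  · subst hY
    simp [Holds]
  · simp [Holds, hY]

variable (Ag PVar LVar) in
/-- A formula unfolded into a finite flow chart; `scope x p` says that `x` is the entry of a least
fixed point whose body contains the position `p`. -/
structure Program where
  Pos : Type
  finite : Finite Pos
  root : Pos
  instr : Pos → Instr Ag PVar LVar Pos
  scope : Pos → Pos → Prop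

attribute [instance] Program.finite

namespace Program

/-- The condition on the ranks of least fixed points for moving from `w` and `p` to `v` and `q`. -/
def Progress {W : Type} (A : Program Ag PVar LVar) (rank : A.Pos → W → A.Pos → Ordinal.{0})
    (w : W) (p : A.Pos) (v : W) (q : A.Pos) : Prop :=
  ∀ x, A.scope x p → A.scope x q → rank x v q ≤ rank x w p ∧ (q = x → rank x v q < rank x w p)

/-- The program which starts with `I` and continues with the programs `A i`. -/
def node {ι : Type} [Finite ι] (I : Instr Ag PVar LVar ι) (A : ι → Program Ag PVar LVar) :
    Program Ag PVar LVar where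
  Pos := Option (Σ i, (A i).Pos)
  finite := inferInstance
  root := none
  instr
    | none => I.map fun i ↦ some ⟨i, (A i).root⟩
    | some ⟨i, p⟩ => ((A i).instr p).map fun q ↦ some ⟨i, q⟩
  scope x p := ∃ i x' p', (A i).scope x' p' ∧ x = some ⟨i, x'⟩ ∧ p = some ⟨i, p'⟩

/-- The program of a fixed point of `A` in the variable `X`: the entry `none` starts `A`, and `A`
returns there instead of leaving through `X`. -/
def fix [DecidableEq LVar] (isMu : Prop) (X : LVar) (A : Program Ag PVar LVar) :
    Program Ag PVar LVar where
  Pos := Option A.Pos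
  finite := inferInstance
  root := none
  instr
    | none => .goto (some A.root)
    | some p => (A.instr p).subst some (Function.update .exit X (.goto none))
  scope
    | none, _ => isMu
    | some x, some p => A.scope x p
    | some _, none => False

@[simp]
theorem scope_node {ι : Type} [Finite ι] {I : Instr Ag PVar LVar ι}
    {A : ι → Program Ag PVar LVar} {i : ι} {x p : (A i).Pos} :
    (node I A).scope (some ⟨i, x⟩) (some ⟨i, p⟩) ↔ (A i).scope x p := by
  refine ⟨fun ⟨j, x', p', h, hx, hp⟩ ↦ ?_, fun h ↦ ⟨i, x, p, h, rfl, rfl⟩⟩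
  cases hx
  cases hp
  exact h

end Program

/-- The flow chart of a formula. Each occurrence of a subformula has its own position, so that
variables may be bound repeatedly. -/
def Formula.program [DecidableEq LVar] : Formula Ag PVar LVar → Program Ag PVar LVar
  | prop p => .node (.test fun A ↦ p ∈ A) Empty.elim
  | nprop p => .node (.test fun A ↦ p ∉ A) Empty.elim
  | tt => .node (.test fun _ ↦ True) Empty.elim
  | ff => .node (.test fun _ ↦ False) Empty.elim
  | var X => .node (.exit X) Empty.elim
  | and φ ψ => .node (.and true false) fun b ↦ bif b then φ.program else ψ.program
  | or φ ψ => .node (.or true false) fun b ↦ bif b then φ.program else ψ.program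
  | dia i φ => .node (.dia i ()) fun _ ↦ φ.program
  | box i φ => .node (.box i ()) fun _ ↦ φ.program
  | mu X φ => .fix True X φ.program
  | nu X φ => .fix False X φ.program

/-- A certificate that the marked positions of the program `A` hold in `M`: each marked position
leads to marked positions, and while one stays in the scope of a least fixed point `x`, the
ordinal `rank x` never increases and decreases on each return to `x`. -/
structure Marking (L : Ag → Set FrameCond) (M : KModel Ag PVar) (ρ : LVar → Set M.W)
    (A : Program Ag PVar LVar) where
  mark : M.W → A.Pos → Prop
  rank : A.Pos → M.W → A.Pos → Ordinal.{0}
  holds : ∀ w p, mark w p → (A.instr p).Holds L M ρ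
    (fun v ↦ mark v p ∧ A.Progress rank w p v p) (fun v q ↦ mark v q ∧ A.Progress rank w p v q) w

/-! ### Completeness of markings -/

universe u in
theorem exists_ordinal_code {X : Type u} {O : Type*} [LinearOrder O] [WellFoundedLT O] (f : X → O) :
    ∃ g : X → Ordinal.{u}, (∀ a b, f a ≤ f b → g a ≤ g b) ∧ ∀ a b, f a < f b → g a < g b := by
  let r : X → X → Prop := InvImage (· < ·) f
  have : IsWellFounded X r := ⟨InvImage.wf f wellFounded_lt⟩
  refine ⟨IsWellFounded.rank r, fun a b h ↦ ?_, fun a b ↦ IsWellFounded.rank_lt_of_rel (r := r)⟩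
  rw [IsWellFounded.rank_eq]
  exact Ordinal.iSup_le fun c ↦
    Order.succ_le_of_lt (IsWellFounded.rank_lt_of_rel (r := r) (c.2.trans_le h))

theorem exists_approximant_rank {W : Type} (F : Set W →o Set W) :
    ∃ a : W → Ordinal.{0}, ∀ w ∈ F.lfp, w ∈ F {v ∈ F.lfp | a v < a w} := by
  obtain ⟨c, hc⟩ := OrdinalApprox.lfp_mem_range_lfpApprox F
  let a (w : W) : Ordinal.{0} := sInf {b | w ∈ OrdinalApprox.lfpApprox F ⊥ b}
  refine ⟨a, fun w hw ↦ ?_⟩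
  have hwa : w ∈ OrdinalApprox.lfpApprox F ⊥ (a w) :=
    csInf_mem (s := {b | w ∈ OrdinalApprox.lfpApprox F ⊥ b}) ⟨c, by rwa [← hc] at hw⟩
  rw [OrdinalApprox.lfpApprox] at hwa
  rcases hwa with hwa | hwa
  · exact hwa.elim
  · simp only [Set.iSup_eq_iUnion, Set.mem_iUnion, exists_prop] at hwa
    obtain ⟨b, hb, hwb⟩ := hwa
    have hb_lfp : OrdinalApprox.lfpApprox F ⊥ b ≤ F.lfp :=
      OrdinalApprox.lfpApprox_le_of_mem_fixedPoints F F.isFixedPt_lfp bot_le b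
    have hsub : OrdinalApprox.lfpApprox F ⊥ b ⊆ {v ∈ F.lfp | a v < a w} :=
      fun v hv ↦ ⟨hb_lfp hv, lt_of_le_of_lt (csInf_le' hv) hb⟩
    exact F.mono hsub hwb

theorem mem_update_imp [DecidableEq LVar] {X Y : LVar} {S T : Set M.W} (h : w ∈ S → w ∈ T) :
    w ∈ Function.update ρ X S Y → w ∈ Function.update ρ X T Y := by
  rcases eq_or_ne Y X with rfl | hY
  · simpa only [Function.update_self] using h
  · simp only [Function.update_of_ne hY, imp_self]

namespace Marking

variable {A : Program Ag PVar LVar}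

theorem exists_node {ι : Type} [Finite ι] {I : Instr Ag PVar LVar ι}
    {A : ι → Program Ag PVar LVar} (m : ∀ i, Marking L M ρ (A i)) {S : Set M.W}
    (hS : ∀ w ∈ S, I.Holds L M ρ (· ∈ S) (fun v i ↦ (m i).mark v (A i).root) w) :
    ∃ m' : Marking L M ρ (.node I A), ∀ w ∈ S, m'.mark w (Program.node I A).root := by
  let inj (i : ι) (p : (A i).Pos) : (Program.node I A).Pos := some ⟨i, p⟩
  have inj_injective (i : ι) : (inj i).Injective := fun p q h ↦ by cases h; rfl
  let mark (w : M.W) : (Program.node I A).Pos → Prop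
    | none => w ∈ S
    | some ⟨i, p⟩ => (m i).mark w p
  let rank : (Program.node I A).Pos → M.W → (Program.node I A).Pos → Ordinal.{0}
    | none => 0
    | some ⟨i, x⟩ => fun w ↦ Function.extend (inj i) ((m i).rank x w) 0
  have rank_inj {i x w p} : rank (inj i x) w (inj i p) = (m i).rank x w p :=
    (inj_injective i).extend_apply _ _ _
  have progress_none {w v q} : (Program.node I A).Progress rank w none v q :=
    fun x hx ↦ by simp [Program.node] at hx
  have progress_inj {i w p v q} (h : (A i).Progress (m i).rank w p v q) :
      (Program.node I A).Progress rank w (inj i p) v (inj i q) := by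
    rintro x ⟨j, x', p', hx', rfl, hp⟩ hq
    cases hp
    rw [rank_inj, rank_inj]
    exact (h x' hx' (Program.scope_node.1 hq)).imp_right fun hlt hqx ↦
      hlt (inj_injective i hqx)
  refine ⟨⟨mark, rank, ?_⟩, fun w ↦ id⟩
  rintro w (_ | ⟨i, p⟩) hw
  · exact Instr.holds_map.2 ((hS w hw).mono (fun _ ↦ id) (fun v hv ↦ ⟨hv, progress_none⟩)
      fun v i hv ↦ ⟨hv, progress_none⟩)
  · exact Instr.holds_map.2 (((m i).holds w p hw).mono (fun _ ↦ id)
      (fun v ↦ And.imp_right progress_inj) fun v q ↦ And.imp_right progress_inj)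

/-- Each position can be given the least index `level` of a marking in which it is marked. Comparing
levels first makes the ranks of the different markings compatible. -/
theorem exists_level {σ : Ordinal.{0} → LVar → Set M.W} (m : ∀ α, Marking L M (σ α) A) :
    ∃ (level : M.W → A.Pos → Ordinal.{0}) (rank : A.Pos → M.W → A.Pos → Ordinal.{0}),
      (∀ α w p, (m α).mark w p → level w p ≤ α ∧ (m (level w p)).mark w p) ∧
      ∀ w p v q, (m (level w p)).mark v q → A.Progress (m (level w p)).rank w p v q →
        A.Progress rank w p v q := by
  let level (w : M.W) (p : A.Pos) : Ordinal.{0} := sInf {α | (m α).mark w p}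
  have level_le {α w p} (h : (m α).mark w p) : level w p ≤ α := csInf_le' h
  let rankAt (α : Ordinal.{0}) (x : A.Pos) (w : M.W) (p : A.Pos) : Ordinal.{0} := (m α).rank x w p
  choose code code_le code_lt using fun x ↦ exists_ordinal_code fun z : M.W × A.Pos ↦
    toLex (level z.1 z.2, rankAt (level z.1 z.2) x z.1 z.2)
  refine ⟨level, fun x w p ↦ code x (w, p), fun α w p h ↦ ⟨level_le h, ?_⟩,
    fun w p v q hq h x hxp hxq ↦ ?_⟩
  · exact csInf_mem (s := {α | (m α).mark w p}) ⟨α, h⟩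
  rcases (level_le hq).lt_or_eq with hlt | heq
  · have hcode := code_lt x (v, q) (w, p) (Prod.Lex.toLex_lt_toLex.2 (.inl hlt))
    exact ⟨hcode.le, fun _ ↦ hcode⟩
  · have hrank : rankAt (level v q) x v q = rankAt (level w p) x v q := by rw [heq]
    refine ⟨code_le x (v, q) (w, p) (Prod.Lex.toLex_le_toLex.2 (.inr ⟨heq, ?_⟩)),
      fun hqx ↦ code_lt x (v, q) (w, p) (Prod.Lex.toLex_lt_toLex.2 (.inr ⟨heq, ?_⟩))⟩
    · exact hrank.trans_le (h x hxp hxq).1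
    · exact hrank.trans_lt ((h x hxp hxq).2 hqx)

theorem exists_fix [DecidableEq LVar] {isMu : Prop} {X : LVar} {S : Set M.W} (a : M.W → Ordinal.{0})
    (m : ∀ α, Marking L M (Function.update ρ X {v ∈ S | isMu → a v < α}) A)
    (hroot : ∀ w ∈ S, (m (a w)).mark w A.root) :
    ∃ m' : Marking L M ρ (.fix isMu X A), ∀ w ∈ S, m'.mark w (Program.fix isMu X A).root := by
  obtain ⟨level, bodyRank, hlevel, hprogress⟩ := exists_level m
  let mark (w : M.W) : (Program.fix isMu X A).Pos → Prop
    | none => w ∈ S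
    | some p => ∃ α, (m α).mark w p
  let rank : (Program.fix isMu X A).Pos → M.W → (Program.fix isMu X A).Pos → Ordinal.{0}
    | none, w, none => a w
    | none, w, some p => level w p
    | some x, w, some p => bodyRank x w p
    | some _, _, none => 0
  have progress_some {w p v q} (hq : (m (level w p)).mark v q)
      (h : A.Progress (m (level w p)).rank w p v q) :
      (Program.fix isMu X A).Progress rank w (some p) v (some q) := by
    rintro (_ | x) hxp hxq
    · exact ⟨(hlevel _ v q hq).1, nofun⟩
    · exact (hprogress w p v q hq h x hxp hxq).imp_right fun hlt hqx ↦ hlt (Option.some.inj hqx)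
  have progress_none {w p v} (ha : isMu → a v < level w p) :
      (Program.fix isMu X A).Progress rank w (some p) v none := by
    rintro (_ | x) hxp hxq
    · exact ⟨(ha hxp).le, fun _ ↦ ha hxp⟩
    · exact hxq.elim
  refine ⟨⟨mark, rank, ?_⟩, fun w ↦ id⟩
  rintro w (_ | p) hw
  · refine ⟨⟨_, hroot w hw⟩, ?_⟩
    rintro (_ | x) hx -
    · exact ⟨(hlevel _ w _ (hroot w hw)).1, nofun⟩
    · exact hx.elim
  · obtain ⟨α, hw⟩ := hw
    refine Instr.holds_subst_update.2 (((m _).holds w p (hlevel α w p hw).2).mono ?_ ?_ ?_)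
    · exact fun Y ↦ mem_update_imp fun hv ↦ ⟨hv.1, progress_none hv.2⟩
    · exact fun v hv ↦ ⟨⟨_, hv.1⟩, progress_some hv.1 hv.2⟩
    · exact fun v q hv ↦ ⟨⟨_, hv.1⟩, progress_some hv.1 hv.2⟩

end Marking

section Semantics

variable [DecidableEq LVar]

theorem Formula.sem_mono_s14 (M : KModel Ag PVar) (φ : Formula Ag PVar LVar) :
    Monotone (φ.sem M) := by
  induction φ with
  | prop | nprop | tt | ff => exact fun _ _ _ ↦ le_rfl
  | var X => exact fun _ _ h ↦ h X
  | and φ ψ hφ hψ => exact fun _ _ h ↦ Set.inter_subset_inter (hφ h) (hψ h)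
  | or φ ψ hφ hψ => exact fun _ _ h ↦ Set.union_subset_union (hφ h) (hψ h)
  | dia i φ hφ => exact fun _ _ h w ⟨v, hv, hvφ⟩ ↦ ⟨v, hv, hφ h hvφ⟩
  | box i φ hφ => exact fun _ _ h w hw v hv ↦ hφ h (hw v hv)
  | mu X φ hφ =>
    exact fun _ _ h ↦ Set.sInter_subset_sInter fun S hS ↦
      (hφ (update_le_update_iff.2 ⟨le_rfl, fun Y _ ↦ h Y⟩)).trans hS
  | nu X φ hφ =>
    exact fun _ _ h ↦ Set.sUnion_subset_sUnion fun S hS ↦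
      hS.trans (hφ (update_le_update_iff.2 ⟨le_rfl, fun Y _ ↦ h Y⟩))

/-- The monotone operator whose fixed points are taken by `mu X φ` and `nu X φ`. -/
def Formula.semHom_s14 (M : KModel Ag PVar) (φ : Formula Ag PVar LVar) (X : LVar)
    (ρ : LVar → Set M.W) : Set M.W →o Set M.W where
  toFun S := φ.sem M (Function.update ρ X S)
  monotone' _ _ h := φ.sem_mono_s14 M (Function.update_mono h)

theorem Formula.exists_marking (hM : IsLModel L M) (φ : Formula Ag PVar LVar) :
    ∀ ρ : LVar → Set M.W, ∃ m : Marking L M ρ φ.program, ∀ w ∈ φ.sem M ρ,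
      m.mark w φ.program.root := by
  induction φ with
  | prop | nprop | tt | ff | var => exact fun ρ ↦ Marking.exists_node Empty.rec fun w ↦ id
  | and φ ψ hφ hψ =>
    intro ρ
    obtain ⟨mφ, hmφ⟩ := hφ ρ
    obtain ⟨mψ, hmψ⟩ := hψ ρ
    exact Marking.exists_node (Bool.rec mψ mφ) fun w hw ↦ ⟨hmφ w hw.1, hmψ w hw.2⟩
  | or φ ψ hφ hψ =>
    intro ρ
    obtain ⟨mφ, hmφ⟩ := hφ ρ
    obtain ⟨mψ, hmψ⟩ := hψ ρ
    exact Marking.exists_node (Bool.rec mψ mφ) fun w ↦ Or.imp (hmφ w) (hmψ w)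
  | dia i φ hφ =>
    intro ρ
    obtain ⟨m, hm⟩ := hφ ρ
    exact Marking.exists_node (fun _ ↦ m) fun w ⟨v, hwv, hv⟩ ↦ ⟨v, hwv, hm v hv⟩
  | box i φ hφ =>
    intro ρ
    obtain ⟨m, hm⟩ := hφ ρ
    refine Marking.exists_node (fun _ ↦ m) fun w hw ↦ ⟨fun v hwv ↦ ⟨hm v (hw v hwv), ?_⟩, ?_⟩
    · exact fun h4 u hvu ↦ hw u (hM i _ h4 w v u hwv hvu)
    · exact fun hT ↦ hm w (hw w (hM i _ hT w))
  | mu X φ hφ =>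
    intro ρ
    obtain ⟨a, ha⟩ := exists_approximant_rank (φ.semHom_s14 M X ρ)
    choose m hm using fun α ↦
      hφ (Function.update ρ X {v ∈ (mu X φ).sem M ρ | True → a v < α})
    refine Marking.exists_fix a m fun w hw ↦ hm _ w ?_
    simp only [true_imp_iff]
    exact ha w hw
  | nu X φ hφ =>
    intro ρ
    choose m hm using fun α ↦
      hφ (Function.update ρ X {v ∈ (nu X φ).sem M ρ | False → (0 : Ordinal) < α})
    refine Marking.exists_fix (fun _ ↦ 0) m fun w hw ↦ hm _ w ?_
    simp only [false_imp_iff, and_true, Set.ofPred_mem_eq]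
    exact (φ.semHom_s14 M X ρ).map_gfp.ge hw

end Semantics

/-! ### Soundness of markings -/

/-- The relation `R` extended by what the conditions `T` and `4` of `L` require. -/
def frameClosure {W : Type} (L : Ag → Set FrameCond) (R : Ag → W → W → Prop) (i : Ag) (w v : W) :
    Prop :=
  (.T ∈ L i ∧ w = v) ∨ R i w v ∨ (.four ∈ L i ∧ Relation.TransGen (R i) w v)

/-- The model `M` with its relations replaced by their frame closures. -/
def KModel.closure (L : Ag → Set FrameCond) (M : KModel Ag PVar) : KModel Ag PVar where
  W := M.W
  h_ne := M.h_ne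
  R := frameClosure L M.R
  V := M.V

theorem isLModel_closure (hL : ∀ i, L i ⊆ {FrameCond.D, FrameCond.T, FrameCond.four})
    (hD : ∀ i, .D ∈ L i → ∀ w, ∃ v, M.R i w v) : IsLModel L (M.closure L) := by
  intro i c hc
  rcases hL i hc with rfl | rfl | rfl
  · exact fun w ↦ (hD i hc w).imp fun v hv ↦ .inr (.inl hv)
  · exact fun w ↦ .inl ⟨hc, rfl⟩
  · have eq_or_transGen {w v} (h : frameClosure L M.R i w v) :
        w = v ∨ Relation.TransGen (M.R i) w v :=
      h.imp And.right fun h ↦ h.elim .single And.right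
    intro w v u hwv hvu
    rcases eq_or_transGen hwv with rfl | hwv'
    · exact hvu
    rcases eq_or_transGen hvu with rfl | hvu'
    · exact hwv
    · exact .inr (.inr ⟨hc, hwv'.trans hvu'⟩)

namespace Marking

/-- The marking of the `i`-th program below a node. -/
def child {ι : Type} [Finite ι] {I : Instr Ag PVar LVar ι} {A : ι → Program Ag PVar LVar}
    (m : Marking L M ρ (.node I A)) (i : ι) : Marking L M ρ (A i) where
  mark w p := m.mark w (some ⟨i, p⟩)
  rank x w p := m.rank (some ⟨i, x⟩) w (some ⟨i, p⟩)
  holds w p hp := by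
    have progress {v q} (h : (Program.node I A).Progress m.rank w (some ⟨i, p⟩) v (some ⟨i, q⟩)) :
        (A i).Progress (fun x w p ↦ m.rank (some ⟨i, x⟩) w (some ⟨i, p⟩)) w p v q :=
      fun x hxp hxq ↦ (h _ (Program.scope_node.2 hxp) (Program.scope_node.2 hxq)).imp_right
        fun hlt hqx ↦ hlt (hqx ▸ rfl)
    exact (Instr.holds_map.1 (m.holds w _ hp)).mono (fun _ ↦ id)
      (fun v ↦ And.imp_right progress) fun v q ↦ And.imp_right progress

theorem holds_root {ι : Type} [Finite ι] {I : Instr Ag PVar LVar ι}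
    {A : ι → Program Ag PVar LVar} (m : Marking L M ρ (.node I A))
    (hw : m.mark w (Program.node I A).root) :
    I.Holds L M ρ (fun v ↦ m.mark v (Program.node I A).root)
      (fun v i ↦ (m.child i).mark v (A i).root) w :=
  (Instr.holds_map.1 (m.holds w none hw)).mono (fun _ ↦ id) (fun _ ↦ And.left) fun _ _ ↦ And.left

section Fix

variable [DecidableEq LVar] {isMu : Prop} {X : LVar} {A : Program Ag PVar LVar}
  (m : Marking L M ρ (.fix isMu X A))

/-- The marking of the body of a fixed point, restricted by a bound on the rank of its entry. -/
def body (α : Ordinal.{0}) :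
    Marking L M
      (Function.update ρ X {v | m.mark v none ∧ (isMu → m.rank none v none < α)}) A where
  mark w p := m.mark w (some p) ∧ (isMu → m.rank none w (some p) ≤ α)
  rank x w p := m.rank (some x) w (some p)
  holds w p hp := by
    have progress {v q} (h : (Program.fix isMu X A).Progress m.rank w (some p) v (some q)) :
        (isMu → m.rank none v (some q) ≤ α) ∧
          A.Progress (fun x w p ↦ m.rank (some x) w (some p)) w p v q :=
      ⟨fun hmu ↦ (h none hmu hmu).1.trans (hp.2 hmu), fun x hxp hxq ↦
        (h (some x) hxp hxq).imp_right fun hlt hqx ↦ hlt (congrArg some hqx)⟩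
    have next {v q} (h : m.mark v (some q) ∧
        (Program.fix isMu X A).Progress m.rank w (some p) v (some q)) :
        (m.mark v (some q) ∧ (isMu → m.rank none v (some q) ≤ α)) ∧
          A.Progress (fun x w p ↦ m.rank (some x) w (some p)) w p v q :=
      ⟨⟨h.1, (progress h.2).1⟩, (progress h.2).2⟩
    refine (Instr.holds_subst_update.1 (m.holds w _ hp.1)).mono (fun Y ↦ mem_update_imp ?_)
      (fun v ↦ next) fun v q ↦ next
    exact fun ⟨hmark, h⟩ ↦ ⟨hmark, fun hmu ↦ ((h none hmu hmu).2 rfl).trans_le (hp.2 hmu)⟩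

theorem mark_body_root (hw : m.mark w none) {α : Ordinal.{0}}
    (hα : isMu → m.rank none w none ≤ α) : (m.body α).mark w A.root :=
  have ⟨hmark, hprogress⟩ := m.holds w none hw
  ⟨hmark, fun hmu ↦ (hprogress none hmu hmu).1.trans (hα hmu)⟩

end Fix

end Marking

theorem Formula.mem_sem_of_mark [DecidableEq LVar] (φ : Formula Ag PVar LVar) :
    ∀ (ρ : LVar → Set M.W) (m : Marking L M ρ φ.program) (w : M.W),
      m.mark w φ.program.root → w ∈ φ.sem (M.closure L) ρ := by
  induction φ with
  | prop | nprop | tt | ff | var => exact fun ρ m w hw ↦ m.holds_root hw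
  | and φ ψ hφ hψ =>
    exact fun ρ m w hw ↦ (m.holds_root hw).imp (hφ ρ (m.child true) w) (hψ ρ (m.child false) w)
  | or φ ψ hφ hψ =>
    exact fun ρ m w hw ↦
      Or.imp (hφ ρ (m.child true) w) (hψ ρ (m.child false) w) (m.holds_root hw)
  | dia i φ hφ =>
    exact fun ρ m w hw ↦ (m.holds_root hw).imp fun v ↦
      And.imp (fun h ↦ .inr (.inl h)) (hφ ρ (m.child ()) v)
  | box i φ hφ =>
    intro ρ m w hw v hwv
    apply hφ ρ (m.child ()) v
    rcases hwv with ⟨hT, rfl⟩ | hwv | ⟨h4, hwv⟩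
    · exact (m.holds_root hw).2 hT
    · exact ((m.holds_root hw).1 v hwv).1
    · induction hwv using Relation.TransGen.head_induction_on with
      | single hvu => exact ((m.holds_root hw).1 v hvu).1
      | head hwu _ ih => exact ih (((m.holds_root hw).1 _ hwu).2 h4)
  | mu X φ hφ =>
    intro ρ m w hw
    induction hα : m.rank none w none using WellFoundedLT.induction generalizing w with
    | ind α ih =>
      refine (φ.semHom_s14 (M.closure L) X ρ).map_lfp.le (φ.sem_mono_s14 _ ?_
        (hφ _ (m.body α) w (m.mark_body_root hw fun _ ↦ hα.le)))
      exact Function.update_mono fun v hv ↦ ih _ (hv.2 trivial) v hv.1 rfl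
  | nu X φ hφ =>
    intro ρ m w hw
    refine (φ.semHom_s14 (M.closure L) X ρ).le_gfp (a := {v | m.mark v none}) (fun v hv ↦ ?_) hw
    exact φ.sem_mono_s14 _ (Function.update_mono fun u hu ↦ hu.1)
      (hφ _ (m.body 0) v (m.mark_body_root hv False.elim))

/-! ### Folding a marking -/

namespace Marking

variable {A : Program Ag PVar LVar}

theorem exists_children (hM : IsLModel L M) (m : Marking L M ρ A) :
    ∃ child : M.W → A.Pos ⊕ Ag → M.W,
      (∀ w p i q, m.mark w p → A.instr p = .dia i q → M.R i w (child w (.inl p)) ∧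
        m.mark (child w (.inl p)) q ∧ A.Progress m.rank w p (child w (.inl p)) q) ∧
      ∀ w i, .D ∈ L i → M.R i w (child w (.inr i)) := by
  have exists_dia_child (w : M.W) (p : A.Pos) : ∃ v, ∀ i q, m.mark w p → A.instr p = .dia i q →
      M.R i w v ∧ m.mark v q ∧ A.Progress m.rank w p v q := by
    by_cases h : ∃ i q, m.mark w p ∧ A.instr p = .dia i q
    · obtain ⟨i, q, hw, hp⟩ := h
      have hnext := m.holds w p hw
      rw [hp] at hnext
      obtain ⟨v, hv⟩ := hnext
      refine ⟨v, fun i' q' _ hp' ↦ ?_⟩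
      cases hp.symm.trans hp'
      exact hv
    · exact ⟨w, fun i q hw hp ↦ (h ⟨i, q, hw, hp⟩).elim⟩
  have exists_serial_child (w : M.W) (i : Ag) : ∃ v, .D ∈ L i → M.R i w v := by
    by_cases hi : .D ∈ L i
    · exact (hM i _ hi w).imp fun v hv _ ↦ hv
    · exact ⟨w, fun h ↦ (hi h).elim⟩
  choose diaChild hdia using exists_dia_child
  choose serialChild hserial using exists_serial_child
  exact ⟨fun w ↦ Sum.elim (diaChild w) (serialChild w), hdia, hserial⟩

/-- The ranks of a marking in the form in which they are folded. -/
def jointRank (m : Marking L M ρ A) (w : M.W) (x : A.Pos × A.Pos) : Ordinal.{0} :=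
  m.rank x.1 w x.2

/-- The model on the states of a folding, with one successor for each child in `M`. -/
def foldModel {Δ : Type} {child : M.W → Δ → M.W} {m : Marking L M ρ A}
    (F : Folding m.mark child m.jointRank) : KModel Ag PVar where
  W := F.State
  h_ne := M.h_ne.elim fun w ↦ (F.exists_node w).nonempty
  R i s t := ∃ d, t = F.move s d ∧ M.R i (F.node s) (child (F.node s) d)
  V s := M.V (F.node s)

/-- The marking of the folded model; finite ranks suffice there. -/
def fold {Δ : Type} {child : M.W → Δ → M.W} {m : Marking L M ρ A}
    (F : Folding m.mark child m.jointRank)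
    (hchild : ∀ w p i q, m.mark w p → A.instr p = .dia i q → ∃ d, M.R i w (child w d) ∧
      m.mark (child w d) q ∧ A.Progress m.rank w p (child w d) q) :
    Marking L (foldModel F) (fun X ↦ {s | F.node s ∈ ρ X}) A where
  mark s := m.mark (F.node s)
  rank x s p := F.rank s (x, p)
  holds s p hp := by
    let Next (t : F.State) (q : A.Pos) : Prop :=
      m.mark (F.node t) q ∧ A.Progress (fun x s p ↦ (F.rank s (x, p) : Ordinal)) s p t q
    have next_self {q} (h : m.mark (F.node s) q ∧ A.Progress m.rank (F.node s) p (F.node s) q) :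
        Next s q :=
      ⟨h.1, fun x hxp hxq ↦ (h.2 x hxp hxq).imp
        (fun hle ↦ Nat.cast_le.2 (F.rank_le s (x, p) (x, q) hle))
        fun hlt hqx ↦ Nat.cast_lt.2 (F.rank_lt s (x, p) (x, q) (hlt hqx))⟩
    have next_move {d q} (h : m.mark (child (F.node s) d) q ∧
        A.Progress m.rank (F.node s) p (child (F.node s) d) q) : Next (F.move s d) q :=
      ⟨(congrFun (F.lab_move s d) q).mpr h.1, fun x hxp hxq ↦ (h.2 x hxp hxq).imp
        (fun hle ↦ Nat.cast_le.2 (F.rank_move_le s d (x, p) (x, q) hle))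
        fun hlt hqx ↦ Nat.cast_lt.2 (F.rank_move_lt s d (x, p) (x, q) (hlt hqx))⟩
    have h := m.holds (F.node s) p hp
    cases hI : A.instr p <;> rw [hI] at h
    case test | exit => exact h
    case goto => exact next_self h
    case and => exact h.imp next_self next_self
    case or => exact Or.imp next_self next_self h
    case dia i q =>
      obtain ⟨d, hR, hnext⟩ := hchild _ p i q hp hI
      exact ⟨F.move s d, ⟨d, rfl, hR⟩, next_move hnext⟩
    case box i q =>
      refine ⟨?_, fun hT ↦ next_self (h.2 hT)⟩
      rintro _ ⟨d, rfl, hR⟩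
      exact (h.1 _ hR).imp next_move fun hstay h4 ↦ next_move (hstay h4)

end Marking

/-- A bound for the number of memories needed to fold a marking of a program with `n` positions: a
memory is a set of positions with a relation and an order on pairs of positions. -/
def foldBound (n : ℕ) : ℕ := 2 ^ n * 2 ^ (n * n * (n * n)) * 2 ^ (n * n * (n * n))

theorem Marking.exists_finite {A : Program Ag PVar LVar} (hM : IsLModel L M)
    (m : Marking L M ρ A) :
    ∃ (N : KModel Ag PVar) (σ : LVar → Set N.W) (m' : Marking L N σ A),
      Finite N.W ∧ Nat.card N.W ≤ foldBound (Nat.card A.Pos) ∧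
      (∀ i, .D ∈ L i → ∀ s, ∃ t, N.R i s t) ∧ ∀ w p, m.mark w p → ∃ s, m'.mark s p := by
  obtain ⟨child, hdia, hD⟩ := m.exists_children hM
  obtain ⟨F, hfinite, hcard⟩ :=
    exists_folding m.mark child m.jointRank (Nat.card_prod A.Pos A.Pos)
  refine ⟨foldModel F, _, fold F fun w p i q hp hI ↦ ⟨_, hdia w p i q hp hI⟩, hfinite,
    hcard.trans_eq ?_, fun i hi s ↦ ⟨_, .inr i, rfl, hD _ i hi⟩, fun w p hp ↦ ?_⟩
  · rw [foldBound, Nat.card_fun, Nat.card_eq_fintype_card (α := Prop), Fintype.card_prop]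
  · obtain ⟨s, hs⟩ := F.exists_node w
    exact ⟨s, (congrFun hs p).mpr hp⟩

/-! ### The bound -/

theorem add_add_one_lt_two_pow {m n a b c : ℕ} (hm : m < 2 ^ a) (hn : n < 2 ^ b)
    (hc : max a b < c) : m + n + 1 < 2 ^ c := by
  have ha := Nat.pow_le_pow_right two_pos (Nat.succ_le_of_lt ((le_max_left a b).trans_lt hc))
  have hb := Nat.pow_le_pow_right two_pos (Nat.succ_le_of_lt ((le_max_right a b).trans_lt hc))
  rw [pow_succ] at ha hb
  omega

theorem Program.card_node {ι : Type} [Fintype ι] (I : Instr Ag PVar LVar ι)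
    (A : ι → Program Ag PVar LVar) :
    Nat.card (Program.node I A).Pos = (∑ i, Nat.card (A i).Pos) + 1 := by
  rw [← Nat.card_sigma, ← Finite.card_option]
  rfl

theorem Program.card_fix [DecidableEq LVar] (isMu : Prop) (X : LVar) (A : Program Ag PVar LVar) :
    Nat.card (Program.fix isMu X A).Pos = Nat.card A.Pos + 1 :=
  Finite.card_option

section Size

theorem Formula.mem_subList_self (φ : Formula Ag PVar LVar) : φ ∈ φ.subList := by
  cases φ <;> simp [subList]

theorem Formula.sizeOf_le_of_mem_subList_s14 {φ ψ : Formula Ag PVar LVar} (h : ψ ∈ φ.subList) :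
    sizeOf ψ ≤ sizeOf φ := by
  induction φ with
  | prop | nprop | tt | ff | var => simp_all [subList]
  | and φ₁ φ₂ ih₁ ih₂ | or φ₁ φ₂ ih₁ ih₂ =>
    simp only [subList, List.mem_cons, List.mem_append] at h
    rcases h with rfl | h | h
    · exact le_rfl
    · exact (ih₁ h).trans (by simp +arith)
    · exact (ih₂ h).trans (by simp +arith)
  | dia _ φ ih | box _ φ ih | mu _ φ ih | nu _ φ ih =>
    simp only [subList, List.mem_cons] at h
    rcases h with rfl | h
    · exact le_rfl
    · exact (ih h).trans (by simp)

variable [DecidableEq Ag] [DecidableEq PVar] [DecidableEq LVar]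

theorem fsize_lt_fsize {φ ψ : Formula Ag PVar LVar} (hsub : ψ.subList ⊆ φ.subList)
    (hsize : sizeOf ψ < sizeOf φ) : fsize ψ < fsize φ :=
  Finset.card_lt_card <| Finset.ssubset_iff_of_subset (Multiset.toFinset_subset.2 hsub) |>.2
    ⟨φ, List.mem_toFinset.2 φ.mem_subList_self, fun h ↦
      hsize.not_ge (Formula.sizeOf_le_of_mem_subList_s14 (List.mem_toFinset.1 h))⟩

theorem Formula.card_program_lt (φ : Formula Ag PVar LVar) :
    Nat.card φ.program.Pos < 2 ^ fsize φ := by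
  induction φ with
  | prop | nprop | tt | ff | var => simp [program, Program.card_node, fsize, subList]
  | and φ ψ hφ hψ | or φ ψ hφ hψ =>
    rw [program, Program.card_node, Fintype.sum_bool]
    refine add_add_one_lt_two_pow hφ hψ (max_lt (fsize_lt_fsize ?_ ?_) (fsize_lt_fsize ?_ ?_))
    · simp [subList]
    · simp +arith
    · simp [subList]
    · simp +arith
  | dia _ φ hφ | box _ φ hφ | mu _ φ hφ | nu _ φ hφ =>
    refine lt_of_le_of_lt ?_
      (add_add_one_lt_two_pow hφ hφ ((max_self _).trans_lt (fsize_lt_fsize ?_ ?_)))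
    · simp [program, Program.card_node, Program.card_fix]
    · simp [subList]
    · simp

end Size

theorem primrec_two_pow : Primrec fun n : ℕ ↦ 2 ^ n :=
  (Primrec₂.unpaired'.1 Nat.Primrec.pow).comp (.const 2) .id

theorem primrec_foldBound : Primrec foldBound := by
  have hsq : Primrec fun n : ℕ ↦ n * n := Primrec.nat_mul.comp .id .id
  have hfour : Primrec fun n : ℕ ↦ 2 ^ (n * n * (n * n)) := primrec_two_pow.comp (hsq.comp hsq)
  exact Primrec.nat_mul.comp (Primrec.nat_mul.comp primrec_two_pow hfour) hfour

theorem foldBound_mono : Monotone foldBound := by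
  intro m n h
  unfold foldBound
  gcongr <;> exact one_le_two

end Programs

theorem finite_model_property_DT4_general [DecidableEq Ag] [DecidableEq PVar] [DecidableEq LVar]
    (L : Ag → Set FrameCond)
    (hL : ∀ a : Ag, L a ⊆ {FrameCond.D, FrameCond.T, FrameCond.four}) :
    ∃ κ : ℕ → ℕ, Computable κ ∧
      ∀ φ : Formula Ag PVar LVar, LSatisfiable L φ →
        ∃ (M : KModel Ag PVar), IsLModel L M ∧
          Finite M.W ∧ Nat.card M.W ≤ κ (fsize φ) ∧
          ∃ (w : M.W) (ρ : LVar → Set M.W), w ∈ Formula.sem M φ ρ := by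
  refine ⟨fun n ↦ foldBound (2 ^ n), (primrec_foldBound.comp primrec_two_pow).to_comp, ?_⟩
  rintro φ ⟨M, hM, w, ρ, hw⟩
  obtain ⟨m, hm⟩ := φ.exists_marking hM ρ
  obtain ⟨N, σ, m', hfinite, hcard, hD, hmark⟩ := m.exists_finite hM
  obtain ⟨s, hs⟩ := hmark w φ.program.root (hm w hw)
  exact ⟨N.closure L, isLModel_closure hL hD, hfinite,
    hcard.trans (foldBound_mono φ.card_program_lt.le), s, σ, φ.mem_sem_of_mark σ m' s hs⟩

/-- if every agent's frame conditions in L are among D, T, 4, then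
there is a computable κ : ℕ → ℕ such that every L-satisfiable closed formula φ
is satisfied in an L-model with at most κ(|φ|) states. (Kozen's finite-model
theorem for the μ-calculus is taken as a hypothesis.) -/
theorem finite_model_property_DT4 [Fintype Ag] [Nonempty Ag]
    [DecidableEq Ag] [DecidableEq PVar] [DecidableEq LVar]
    (hKozen : ∃ κ0 : ℕ → ℕ, Computable κ0 ∧
      ∀ φ : Formula Ag PVar LVar, φ.Closed →
        LSatisfiable (fun _ => (∅ : Set FrameCond)) φ →
        ∃ (M : KModel Ag PVar), IsLModel (fun _ => (∅ : Set FrameCond)) M ∧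
          Finite M.W ∧ Nat.card M.W ≤ κ0 (fsize φ) ∧
          ∃ (w : M.W) (ρ : LVar → Set M.W), w ∈ Formula.sem M φ ρ)
    (L : Ag → Set FrameCond)
    (hL : ∀ a : Ag, L a ⊆ {FrameCond.D, FrameCond.T, FrameCond.four}) :
    ∃ κ : ℕ → ℕ, Computable κ ∧
      ∀ φ : Formula Ag PVar LVar, φ.Closed → LSatisfiable L φ →
        ∃ (M : KModel Ag PVar), IsLModel L M ∧
          Finite M.W ∧ Nat.card M.W ≤ κ (fsize φ) ∧
          ∃ (w : M.W) (ρ : LVar → Set M.W), w ∈ Formula.sem M φ ρ := by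
  obtain ⟨κ, hκ, hmodel⟩ := finite_model_property_DT4_general (PVar := PVar) (LVar := LVar) L hL
  exact ⟨κ, hκ, fun φ _ hφ ↦ hmodel φ hφ⟩
end
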